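/- arXiv:2001.00849 — 3 statements merged into one kernel-verified Lean document; each statement's English description precedes it below -/
import Mathlib

section
/- If 𝓗 is a family of edge-ordered graphs (each with at least one edge) with finite order chromatic number χ'_<(𝓗) = r+1 (where r ≥ 1), then lex(n, 𝓗) = (1 - 1/r + o(1)) n²/2 as n → ∞; that is, for every ε > 0 there is N such that for all n ≥ N, |lex(n, 𝓗) - (1 - 1/r)·n²/2| ≤ ε·n². -/
/-- An edge-ordered graph: a finite simple graph on vertex set `Fin nv`
together with a labeling of (potential) edges.  The edge-order is the order of
the labels; the labeling is required to be injective on the edge set via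
`EOGraph.Valid`. -/
structure EOGraph where
  nv : ℕ
  graph : SimpleGraph (Fin nv)
  label : Sym2 (Fin nv) → ℕ

namespace EOGraph

/-- The labeling is injective on the edge set, hence defines a linear order on the edges. -/
def Valid (G : EOGraph) : Prop :=
  ∀ e ∈ G.graph.edgeSet, ∀ f ∈ G.graph.edgeSet, G.label e = G.label f → e = f

/-- The number of edges of an edge-ordered graph. -/
noncomputable def edges (G : EOGraph) : ℕ := G.graph.edgeSet.ncard

/-- `G.Contains H`: some subgraph of `G`, with the edge-order induced from `G`,
is isomorphic to `H` (via a graph isomorphism preserving the relative order of edges). -/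
def Contains (G H : EOGraph) : Prop :=
  ∃ f : Fin H.nv ↪ Fin G.nv,
    (∀ a b, H.graph.Adj a b → G.graph.Adj (f a) (f b)) ∧
    ∀ a b c d, H.graph.Adj a b → H.graph.Adj c d →
      (H.label s(a, b) < H.label s(c, d) ↔ G.label s(f a, f b) < G.label s(f c, f d))

/-- `G` avoids `H` if no subgraph of `G` (with the induced edge-order) is isomorphic to `H`. -/
def Avoids (G H : EOGraph) : Prop := ¬ G.Contains H

/-- `G` avoids a family if it avoids every member. -/
def AvoidsFam (G : EOGraph) (F : Set EOGraph) : Prop := ∀ H ∈ F, G.Avoids H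

/-- Isomorphism of edge-ordered graphs. -/
def Iso (G H : EOGraph) : Prop :=
  ∃ f : Fin G.nv ≃ Fin H.nv,
    (∀ a b, G.graph.Adj a b ↔ H.graph.Adj (f a) (f b)) ∧
    ∀ a b c d, G.graph.Adj a b → G.graph.Adj c d →
      (G.label s(a, b) < G.label s(c, d) ↔ H.label s(f a, f b) < H.label s(f c, f d))

end EOGraph

/-- A simple graph `G` can avoid the family `F` if some linear order on its edges
(given by a labeling injective on the edge set) makes it into an edge-ordered graph
avoiding `F`. -/
def CanAvoid {n : ℕ} (G : SimpleGraph (Fin n)) (F : Set EOGraph) : Prop :=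
  ∃ L : Sym2 (Fin n) → ℕ, (EOGraph.mk n G L).Valid ∧ (EOGraph.mk n G L).AvoidsFam F

/-- The order chromatic number of a family of edge-ordered graphs: the least chromatic
number of a finite simple graph that cannot avoid the family (`⊤` if every finite
simple graph can avoid it). -/
noncomputable def orderChrom (F : Set EOGraph) : ℕ∞ :=
  ⨅ (n : ℕ) (G : SimpleGraph (Fin n)) (_ : ¬ CanAvoid G F), G.chromaticNumber

/-- The Turán number `lex(n, F)`: the maximum number of edges of an edge-ordered graph
on `n` vertices avoiding the family `F`. -/
noncomputable def lexFam (n : ℕ) (F : Set EOGraph) : ℕ :=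
  sSup {m : ℕ | ∃ G : EOGraph, G.nv = n ∧ G.Valid ∧ G.AvoidsFam F ∧ G.edges = m}

/-- Build a symmetric labeling from a function of the (min, max) of the two endpoints. -/
def symLabel {N : ℕ} (f : Fin N → Fin N → ℕ) : Sym2 (Fin N) → ℕ :=
  Sym2.lift ⟨fun a b => f (min a b) (max a b), fun a b => by
    show f (min a b) (max a b) = f (min b a) (max b a)
    rw [min_comm, max_comm]⟩

/-- The edge-ordered path on `k` vertices `0, 1, …, k-1`, where the edge `{i, i+1}`
gets label `l[i]`. -/
def pathEO (k : ℕ) (l : List ℕ) : EOGraph where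
  nv := k
  graph := SimpleGraph.fromRel (fun a b => (a : ℕ) + 1 = (b : ℕ))
  label := symLabel fun a _ => l.getD (a : ℕ) 0

open SimpleGraph in
/-- One step of the degree-deletion recursion for the extremal number. -/
theorem ex_step (r t : ℕ) (ε : ℝ) (hε : 0 < ε) (hr : 1 ≤ r) (ht : 1 ≤ t) :
    ∃ N : ℕ, ∀ n : ℕ, N ≤ n →
      (extremalNumber (n + 1) (completeEquipartiteGraph (r + 1) t) : ℝ) ≤
        extremalNumber n (completeEquipartiteGraph (r + 1) t) +
          (1 - 1 / (r : ℝ) + ε) * ((n : ℝ) + 1) := by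
  obtain ⟨N, hN⟩ := Filter.eventually_atTop.mp
    (eventually_completeEquipartiteGraph_isContained_of_minDegree hε r t)
  refine ⟨N, fun n hn => ?_⟩
  have hbot : completeEquipartiteGraph (r + 1) t ≠ ⊥ := by
    rw [Ne, completeEquipartiteGraph_eq_bot_iff]
    omega
  obtain ⟨G, _, hG⟩ := exists_isExtremal_free (V := Fin (n + 1)) hbot
  have hcard := card_edgeFinset_of_isExtremal_free hG
  rw [Fintype.card_fin] at hcard
  have hfree := hG.prop
  have hmin : (G.minDegree : ℝ) < (1 - 1 / (r : ℝ) + ε) * ((n : ℝ) + 1) := by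
    by_contra hcon
    push Not at hcon
    apply hfree
    refine hN (n + 1) (by omega) ?_
    push_cast
    exact hcon
  obtain ⟨v, hv⟩ := G.exists_minimal_degree_vertex
  have hdel := card_edgeFinset_deleteIncidenceSet_le_extremalNumber hfree v
  rw [card_edgeFinset_deleteIncidenceSet, Fintype.card_fin, hcard, ← hv,
    Nat.add_sub_cancel, Nat.sub_le_iff_le_add] at hdel
  have : (extremalNumber (n + 1) (completeEquipartiteGraph (r + 1) t) : ℝ) ≤
      extremalNumber n (completeEquipartiteGraph (r + 1) t) + G.minDegree := by
    exact_mod_cast hdel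
  linarith

open SimpleGraph in
/-- The upper bound in the Erdős–Stone theorem. -/
theorem ex_upper (r t : ℕ) (ε : ℝ) (hε : 0 < ε) (hr : 1 ≤ r) (ht : 1 ≤ t) :
    ∃ N : ℕ, ∀ n : ℕ, N ≤ n →
      (extremalNumber n (completeEquipartiteGraph (r + 1) t) : ℝ) ≤
        (1 - 1 / (r : ℝ)) * (n : ℝ) ^ 2 / 2 + ε * (n : ℝ) ^ 2 := by
  obtain ⟨N, hN⟩ := ex_step r t ε hε hr ht
  set e : ℕ → ℝ := fun n => (extremalNumber n (completeEquipartiteGraph (r + 1) t) : ℝ) with he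
  have hr0 : (0 : ℝ) ≤ 1 - 1 / (r : ℝ) := by
    rw [sub_nonneg, div_le_one (by positivity)]
    exact_mod_cast hr
  have hrec : ∀ k : ℕ, e (N + k) ≤ e N +
      (1 - 1 / (r : ℝ) + ε) * (((N + k : ℕ) : ℝ) ^ 2 + ((N + k : ℕ) : ℝ)) / 2 := by
    intro k
    induction k with
    | zero =>
      have : (0:ℝ) ≤ (1 - 1 / (r : ℝ) + ε) * (((N + 0 : ℕ) : ℝ) ^ 2 + ((N + 0 : ℕ) : ℝ)) / 2 := by
        positivity
      simpa using this
    | succ k ih =>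
      have h := hN (N + k) (by omega)
      change e (N + k + 1) ≤ e (N + k) + _ at h
      have : N + (k + 1) = N + k + 1 := by omega
      rw [this]
      push_cast at h ih ⊢
      linarith
  set c := 1 - 1 / (r : ℝ) with hc
  obtain ⟨M, hM⟩ := exists_nat_gt ((e N + (c + ε) / 2) / (ε / 2))
  refine ⟨max (max N M) 1, fun n hn => ?_⟩
  have h1 : N ≤ n := by omega
  have h2 : M ≤ n := by omega
  have h3 : (1 : ℝ) ≤ n := by exact_mod_cast (by omega : 1 ≤ n)
  have h := hrec (n - N)
  rw [Nat.add_sub_cancel' h1] at h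
  rw [div_lt_iff₀ (by positivity)] at hM
  have h4 : (M : ℝ) ≤ n := by exact_mod_cast h2
  have heN : 0 ≤ e N := by simp [he]
  change e n ≤ _
  have h5 : e N + (c + ε) / 2 ≤ n * (ε / 2) := by nlinarith
  have h6 : (e N + (c + ε) / 2) * n ≤ n * (ε / 2) * n := by nlinarith
  have h7 : e N ≤ e N * n := by nlinarith
  nlinarith

open SimpleGraph in
/-- A lower bound on the size of the Turán graph. -/
theorem turan_lower (r n : ℕ) (hr : 1 ≤ r) :
    (1 - 1 / (r : ℝ)) * (n : ℝ) ^ 2 / 2 - (r : ℝ) ^ 2 - 1 ≤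
      ((turanGraph n r).edgeFinset.card : ℝ) := by
  have h := card_edgeFinset_turanGraph (n := n) (r := r)
  have hm : n % r < r := Nat.mod_lt _ (by omega)
  have hle : (n % r) ^ 2 ≤ n ^ 2 := Nat.pow_le_pow_left (Nat.mod_le _ _) 2
  have hdiv : (n ^ 2 - (n % r) ^ 2) * (r - 1) <
      2 * r * ((n ^ 2 - (n % r) ^ 2) * (r - 1) / (2 * r) + 1) :=
    Nat.lt_mul_div_succ _ (by omega)
  have h2 : (n ^ 2 - (n % r) ^ 2) * (r - 1) / (2 * r) ≤ (turanGraph n r).edgeFinset.card := by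
    omega
  have h3 : (n ^ 2 - (n % r) ^ 2) * (r - 1) ≤ 2 * r * ((turanGraph n r).edgeFinset.card + 1) :=
    hdiv.le.trans (Nat.mul_le_mul_left _ (by omega))
  have h4 : (((n ^ 2 - (n % r) ^ 2) * (r - 1) : ℕ) : ℝ) ≤
      ((2 * r * ((turanGraph n r).edgeFinset.card + 1) : ℕ) : ℝ) := by exact_mod_cast h3
  rw [Nat.cast_mul, Nat.cast_sub hle, Nat.cast_sub hr] at h4
  push_cast at h4
  have hr' : (1 : ℝ) ≤ r := by exact_mod_cast hr
  have hm' : ((n % r : ℕ) : ℝ) ≤ r := by exact_mod_cast hm.le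
  have hm0 : (0 : ℝ) ≤ ((n % r : ℕ) : ℝ) := by positivity
  have hsq : ((n % r : ℕ) : ℝ) ^ 2 ≤ (r : ℝ) ^ 2 := by gcongr
  set E : ℝ := ((turanGraph n r).edgeFinset.card : ℝ)
  have h5 : ((n : ℝ) ^ 2 - (r : ℝ) ^ 2) * (r - 1) ≤ 2 * r * (E + 1) := by nlinarith
  have h6 : (1 - 1 / (r : ℝ)) * (n : ℝ) ^ 2 / 2 = (n : ℝ) ^ 2 * (r - 1) / (2 * r) := by
    field_simp
  have h7 : (n : ℝ) ^ 2 * (r - 1) / (2 * r) ≤ E + 1 + (r : ℝ) ^ 2 := by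
    rw [div_le_iff₀ (by positivity)]
    nlinarith [mul_nonneg (sq_nonneg (r : ℝ)) (by linarith : (0 : ℝ) ≤ r)]
  linarith

/-- A graph containing a graph that cannot avoid `F` has no `F`-avoiding ordering. -/
theorem not_avoids_of_contained {m : ℕ} {G₀ : SimpleGraph (Fin m)} (F : Set EOGraph)
    (h₀ : ¬ CanAvoid G₀ F) (G : EOGraph) (hG : G.Valid) (hc : G₀.IsContained G.graph) :
    ¬ G.AvoidsFam F := by
  intro hav
  apply h₀
  obtain ⟨f⟩ := hc
  refine ⟨fun e => G.label (e.map f), ?_, ?_⟩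
  · intro e he e' he' hee
    have := hG _ (f.toHom.map_mem_edgeSet he) _ (f.toHom.map_mem_edgeSet he') hee
    exact Sym2.map.injective f.injective this
  · rintro H hH ⟨g, hg1, hg2⟩
    apply hav H hH
    refine ⟨g.trans ⟨f, f.injective⟩, fun a b hab => f.toHom.map_adj (hg1 a b hab), ?_⟩
    intro a b c d hab hcd
    exact hg2 a b c d hab hcd

theorem lexFam_bdd (n : ℕ) (F : Set EOGraph) :
    BddAbove {m : ℕ | ∃ G : EOGraph, G.nv = n ∧ G.Valid ∧ G.AvoidsFam F ∧ G.edges = m} := by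
  refine ⟨Nat.card (Sym2 (Fin n)), ?_⟩
  rintro m ⟨G, rfl, -, -, rfl⟩
  exact Set.ncard_le_card _

open SimpleGraph in
theorem turan_mem (F : Set EOGraph) (r n : ℕ) (hr : 1 ≤ r)
    (hchi : orderChrom F = ((r : ℕ∞) + 1)) :
    (turanGraph n r).edgeFinset.card ∈
      {m : ℕ | ∃ G : EOGraph, G.nv = n ∧ G.Valid ∧ G.AvoidsFam F ∧ G.edges = m} := by
  have hcan : CanAvoid (turanGraph n r) F := by
    by_contra hcon
    have h1 : orderChrom F ≤ (turanGraph n r).chromaticNumber :=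
      iInf_le_of_le n (iInf_le_of_le _ (iInf_le _ hcon))
    have h2 : (turanGraph n r).Colorable r :=
      ⟨Coloring.mk (fun v => (⟨v % r, Nat.mod_lt _ (by omega)⟩ : Fin r)) (by
        intro v w hvw h
        exact hvw (by simpa using h))⟩
    have h3 := h1.trans h2.chromaticNumber_le
    rw [hchi] at h3
    have : r + 1 ≤ r := by exact_mod_cast h3
    omega
  obtain ⟨L, hv, ha⟩ := hcan
  refine ⟨_, rfl, hv, ha, ?_⟩
  rw [EOGraph.edges, ← coe_edgeFinset, Set.ncard_coe_finset]

open SimpleGraph in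
theorem exists_witness (F : Set EOGraph) (r : ℕ) (hchi : orderChrom F = ((r : ℕ∞) + 1)) :
    ∃ (m : ℕ) (G : SimpleGraph (Fin m)), ¬ CanAvoid G F ∧ G.Colorable (r + 1) := by
  have hlt : orderChrom F < (r : ℕ∞) + 1 + 1 := by
    rw [hchi]
    exact_mod_cast Nat.lt_succ_self (r + 1)
  unfold orderChrom at hlt
  simp only [iInf_lt_iff] at hlt
  obtain ⟨m, G, hG, hlt⟩ := hlt
  refine ⟨m, G, hG, ?_⟩
  rw [← chromaticNumber_le_iff_colorable]
  push_cast
  exact Order.le_of_lt_add_one hlt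

open SimpleGraph in
theorem lexFam_le_ex (F : Set EOGraph) (r : ℕ) (hr : 1 ≤ r)
    (hchi : orderChrom F = ((r : ℕ∞) + 1)) :
    ∃ t : ℕ, 1 ≤ t ∧ ∀ n, lexFam n F ≤ extremalNumber n (completeEquipartiteGraph (r + 1) t) := by
  classical
  obtain ⟨m, G₀, h₀, ⟨C⟩⟩ := exists_witness F r hchi
  refine ⟨m + 1, by omega, fun n => ?_⟩
  have hcont : G₀ ⊑ completeEquipartiteGraph (r + 1) (m + 1) := by
    refine isContained_completeEquipartiteGraph_of_colorable C (m + 1) (fun c => ?_)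
    have := Fintype.card_subtype_le (fun x => x ∈ C.colorClass c)
    rw [Fintype.card_fin] at this
    exact this.trans (by omega)
  refine csSup_le ⟨_, turan_mem F r n hr hchi⟩ ?_
  rintro k ⟨G, rfl, hv, ha, rfl⟩
  have hfree : (completeEquipartiteGraph (r + 1) (m + 1)).Free G.graph := fun hc =>
    not_avoids_of_contained F h₀ G hv (hcont.trans hc) ha
  have := card_edgeFinset_le_extremalNumber hfree
  rw [Fintype.card_fin] at this
  rwa [EOGraph.edges, ← coe_edgeFinset, Set.ncard_coe_finset]

/-- Erdős–Stone–Simonovits for edge-ordered graphs: if the order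
chromatic number of the family `F` is `r + 1` with `r ≥ 1`, then
`lex(n, F) = (1 - 1/r + o(1)) n²/2`. -/
theorem lex_eq_ess_of_orderChrom_finite (F : Set EOGraph)
    (hval : ∀ H ∈ F, H.Valid) (hne : ∀ H ∈ F, H.graph.edgeSet.Nonempty)
    (r : ℕ) (hr : 1 ≤ r) (hchi : orderChrom F = ((r : ℕ∞) + 1)) :
    ∀ ε : ℝ, 0 < ε → ∃ N : ℕ, ∀ n : ℕ, N ≤ n →
      |(lexFam n F : ℝ) - (1 - 1 / (r : ℝ)) * (n : ℝ) ^ 2 / 2| ≤ ε * (n : ℝ) ^ 2 := by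
  intro ε hε
  obtain ⟨t, ht, hle⟩ := lexFam_le_ex F r hr hchi
  obtain ⟨N, hN⟩ := ex_upper r t ε hε hr ht
  obtain ⟨M, hM⟩ := exists_nat_gt (((r : ℝ) ^ 2 + 1) / ε)
  rw [div_lt_iff₀ hε] at hM
  refine ⟨max (max N M) 1, fun n hn => ?_⟩
  have h1 : (1 : ℝ) ≤ n := by exact_mod_cast (by omega : 1 ≤ n)
  have h2 : (M : ℝ) ≤ n := by exact_mod_cast (by omega : M ≤ n)
  have hup := hN n (by omega)
  have hle' : (lexFam n F : ℝ) ≤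
      (SimpleGraph.extremalNumber n (SimpleGraph.completeEquipartiteGraph (r + 1) t) : ℝ) := by
    exact_mod_cast hle n
  have hlow := turan_lower r n hr
  have hge : ((SimpleGraph.turanGraph n r).edgeFinset.card : ℝ) ≤ lexFam n F := by
    exact_mod_cast le_csSup (lexFam_bdd n F) (turan_mem F r n hr hchi)
  have h3 : (r : ℝ) ^ 2 + 1 ≤ ε * (n : ℝ) ^ 2 := by
    have : (M : ℝ) ≤ (n : ℝ) ^ 2 := by nlinarith
    nlinarith
  rw [abs_le]
  constructor <;> linarith
end

section
/- The order chromatic number of a family 𝓗 of edge-ordered graphs is infinite if and only if one of the four canonical edge-orders of K_n avoids 𝓗 for all n; that is, if and only if there is a type t ∈ {min, max, inverse min, inverse max} such that for every n the t-labeling of K_n avoids 𝓗. -/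
/-- The four canonical labelings of the complete graph `K_n` (vertices `0,…,n-1`
standing for `v_1,…,v_n`).  For `i < j` (1-based) the edge `v_i v_j` gets label
`n*i + j` (min-labeling, `t = 0`), `n*j + i` (max-labeling, `t = 1`),
`n*i - j` (inverse min-labeling, `t = 2`) or `n*j - i` (inverse max-labeling, `t = 3`). -/
def canonK (t : Fin 4) (n : ℕ) : EOGraph where
  nv := n
  graph := ⊤
  label := symLabel fun a b =>
    ![n * ((a : ℕ) + 1) + ((b : ℕ) + 1),
      n * ((b : ℕ) + 1) + ((a : ℕ) + 1),
      n * ((a : ℕ) + 1) - ((b : ℕ) + 1),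
      n * ((b : ℕ) + 1) - ((a : ℕ) + 1)] t

open Filter in
/-- Iterated ultrafilter quantifier. -/
def Ev4 (Q : ℕ → ℕ → ℕ → ℕ → Prop) : Prop :=
  ∀ᶠ a in (hyperfilter ℕ : Filter ℕ), ∀ᶠ b in (hyperfilter ℕ : Filter ℕ),
    ∀ᶠ c in (hyperfilter ℕ : Filter ℕ), ∀ᶠ d in (hyperfilter ℕ : Filter ℕ), Q a b c d

theorem Ev4.and {Q R : ℕ → ℕ → ℕ → ℕ → Prop} (hQ : Ev4 Q) (hR : Ev4 R) :
    Ev4 (fun a b c d => Q a b c d ∧ R a b c d) := by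
  unfold Ev4 at *
  simp only [Filter.eventually_and]
  exact ⟨hQ, hR⟩

theorem Ev4.decided (Q : ℕ → ℕ → ℕ → ℕ → Prop) :
    Ev4 (fun a b c d => Q a b c d ↔ Ev4 Q) := by
  by_cases h : Ev4 Q
  · simp only [h, iff_true]
  · simp only [h, iff_false]
    unfold Ev4 at *
    simpa only [Ultrafilter.eventually_not] using h

open Filter in
/-- The invariant of the greedy selection. -/
def Ev4Inv (Q : ℕ → ℕ → ℕ → ℕ → Prop) (s : Finset ℕ) : Prop :=
  (∀ a ∈ s, ∀ᶠ b in (hyperfilter ℕ : Filter ℕ),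
    ∀ᶠ c in (hyperfilter ℕ : Filter ℕ), ∀ᶠ d in (hyperfilter ℕ : Filter ℕ), Q a b c d) ∧
  (∀ a ∈ s, ∀ b ∈ s, a < b →
    ∀ᶠ c in (hyperfilter ℕ : Filter ℕ), ∀ᶠ d in (hyperfilter ℕ : Filter ℕ), Q a b c d) ∧
  (∀ a ∈ s, ∀ b ∈ s, ∀ c ∈ s, a < b → b < c →
    ∀ᶠ d in (hyperfilter ℕ : Filter ℕ), Q a b c d) ∧
  (∀ a ∈ s, ∀ b ∈ s, ∀ c ∈ s, ∀ d ∈ s, a < b → b < c → c < d → Q a b c d)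

open Filter in
theorem Ev4.extend {Q : ℕ → ℕ → ℕ → ℕ → Prop} (hQ : Ev4 Q) (s : Finset ℕ) (hs : Ev4Inv Q s) :
    ∃ y, (∀ a ∈ s, a < y) ∧ Ev4Inv Q (insert y s) := by
  obtain ⟨h1, h2, h3, h4⟩ := hs
  have e0 : ∀ᶠ y in (hyperfilter ℕ : Filter ℕ), ∀ a ∈ s, a < y := by
    rw [Filter.eventually_all_finset]
    intro a _
    exact (Nat.hyperfilter_le_atTop) (eventually_gt_atTop a)
  have e1 := (Filter.eventually_all_finset s).2 h1
  have e2 : ∀ᶠ c in (hyperfilter ℕ : Filter ℕ), ∀ a ∈ s, ∀ b ∈ s, a < b →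
      ∀ᶠ d in (hyperfilter ℕ : Filter ℕ), Q a b c d := by
    simp only [Filter.eventually_all_finset, Filter.eventually_imp_distrib_left]
    exact h2
  have e3 : ∀ᶠ d in (hyperfilter ℕ : Filter ℕ), ∀ a ∈ s, ∀ b ∈ s, ∀ c ∈ s, a < b → b < c →
      Q a b c d := by
    simp only [Filter.eventually_all_finset, Filter.eventually_imp_distrib_left]
    exact h3
  obtain ⟨y, y0, y1, y2, y3, y4⟩ := (e0.and (e1.and (e2.and (e3.and hQ)))).exists
  refine ⟨y, y0, ?_, ?_, ?_, ?_⟩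
  · intro a ha
    rcases Finset.mem_insert.1 ha with rfl | ha
    · exact y4
    · exact h1 a ha
  · intro a ha b hb hab
    rcases Finset.mem_insert.1 ha with rfl | ha1
    · rcases Finset.mem_insert.1 hb with rfl | hb
      · omega
      · have := y0 b hb; omega
    · rcases Finset.mem_insert.1 hb with rfl | hb
      · exact y1 a ha1
      · exact h2 a ha1 b hb hab
  · intro a ha b hb c hc hab hbc
    have hle : ∀ z ∈ insert y s, z ≤ y := by
      intro z hz
      rcases Finset.mem_insert.1 hz with rfl | hz
      · exact le_rfl
      · exact (y0 z hz).le
    have hc' := hle c hc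
    have ha1 := Finset.mem_of_mem_insert_of_ne ha (by omega)
    have hb1 := Finset.mem_of_mem_insert_of_ne hb (by omega)
    rcases Finset.mem_insert.1 hc with rfl | hc
    · exact y2 a ha1 b hb1 hab
    · exact h3 a ha1 b hb1 c hc hab hbc
  · intro a ha b hb c hc d hd hab hbc hcd
    have hle : ∀ z ∈ insert y s, z ≤ y := by
      intro z hz
      rcases Finset.mem_insert.1 hz with rfl | hz
      · exact le_rfl
      · exact (y0 z hz).le
    have hd' := hle d hd
    have ha1 := Finset.mem_of_mem_insert_of_ne ha (by omega)
    have hb1 := Finset.mem_of_mem_insert_of_ne hb (by omega)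
    have hc1 := Finset.mem_of_mem_insert_of_ne hc (by omega)
    rcases Finset.mem_insert.1 hd with rfl | hd
    · exact y3 a ha1 b hb1 c hc1 hab hbc
    · exact h4 a ha1 b hb1 c hc1 d hd hab hbc hcd

theorem Ev4.exists_finset {Q : ℕ → ℕ → ℕ → ℕ → Prop} (hQ : Ev4 Q) (m : ℕ) :
    ∃ s : Finset ℕ, s.card = m ∧ Ev4Inv Q s := by
  induction m with
  | zero => exact ⟨∅, rfl, by simp [Ev4Inv]⟩
  | succ m ih =>
    obtain ⟨s, hs, hi⟩ := ih
    obtain ⟨y, hy, hi'⟩ := hQ.extend s hi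
    refine ⟨insert y s, ?_, hi'⟩
    rw [Finset.card_insert_of_notMem, hs]
    intro h
    exact lt_irrefl _ (hy y h)

theorem Ev4.exists_seq {Q : ℕ → ℕ → ℕ → ℕ → Prop} (hQ : Ev4 Q) (m : ℕ) :
    ∃ x : ℕ → ℕ, (∀ i j, i < j → j < m → x i < x j) ∧
      ∀ i j k l, i < j → j < k → k < l → l < m → Q (x i) (x j) (x k) (x l) := by
  obtain ⟨s, hs, -, -, -, h4⟩ := hQ.exists_finset m
  let x : ℕ → ℕ := fun i => if h : i < m then s.orderEmbOfFin hs ⟨i, h⟩ else 0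
  have hx : ∀ i (h : i < m), x i = s.orderEmbOfFin hs ⟨i, h⟩ := fun i h => by simp [x, h]
  have hmem : ∀ i, i < m → x i ∈ s := fun i h => by
    rw [hx i h]; exact Finset.orderEmbOfFin_mem _ _ _
  have hlt : ∀ i j, i < j → j < m → x i < x j := by
    intro i j hij hj
    rw [hx i (by omega), hx j hj]
    exact (s.orderEmbOfFin hs).strictMono (by simpa using hij)
  refine ⟨x, hlt, ?_⟩
  intro i j k l hij hjk hkl hl
  exact h4 _ (hmem i (by omega)) _ (hmem j (by omega)) _ (hmem k (by omega)) _ (hmem l (by omega))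
    (hlt _ _ hij (by omega)) (hlt _ _ hjk (by omega)) (hlt _ _ hkl (by omega))

/-- The canonical comparison of two pairs `i < j` and `k < l`. -/
def CanonLt (t : Fin 4) (i j k l : ℕ) : Prop :=
  ![i < k ∨ i = k ∧ j < l, j < l ∨ j = l ∧ i < k, i < k ∨ i = k ∧ l < j,
    j < l ∨ j = l ∧ k < i] t

theorem CanonLt.total (t : Fin 4) (i j k l : ℕ) :
    CanonLt t i j k l ∨ CanonLt t k l i j ∨ (i = k ∧ j = l) := by
  fin_cases t <;> simp [CanonLt] <;> omega

theorem CanonLt.label {t : Fin 4} {n i j k l : ℕ} (hij : i < j) (hj : j < n) (hkl : k < l)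
    (hl : l < n) (h : CanonLt t i j k l) :
    ![n * (i + 1) + (j + 1), n * (j + 1) + (i + 1), n * (i + 1) - (j + 1),
      n * (j + 1) - (i + 1)] t <
    ![n * (k + 1) + (l + 1), n * (l + 1) + (k + 1), n * (k + 1) - (l + 1),
      n * (l + 1) - (k + 1)] t := by
  have key : ∀ a b : ℕ, a < b → n * (a + 1) + n ≤ n * (b + 1) := by
    intro a b hab
    have : n * (a + 1 + 1) ≤ n * (b + 1) := Nat.mul_le_mul_left n (by omega)
    linarith
  have kn : ∀ a : ℕ, n ≤ n * (a + 1) := fun a => Nat.le_mul_of_pos_right n (by omega)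
  have a1 := kn i
  have a2 := kn j
  have a3 := kn k
  have a4 := kn l
  fin_cases t <;> simp [CanonLt] at h ⊢
  · rcases h with h | ⟨rfl, h⟩
    · have := key _ _ h; omega
    · omega
  · rcases h with h | ⟨rfl, h⟩
    · have := key _ _ h; omega
    · omega
  · rcases h with h | ⟨rfl, h⟩
    · have := key _ _ h; omega
    · omega
  · rcases h with h | ⟨rfl, h⟩
    · have := key _ _ h; omega
    · omega

/-- `M` follows the canonical order of type `t` on indices below `n`. -/
def Follows {Λ : Type*} [LinearOrder Λ] (M : ℕ → ℕ → Λ) (t : Fin 4) (n : ℕ) : Prop :=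
  ∀ i j k l, i < j → j < n → k < l → l < n → CanonLt t i j k l → M i j < M k l

/-- From the values of the comparison patterns to the canonical order, ascending case. -/
theorem follows_asc {Λ : Type*} [LinearOrder Λ] (M : ℕ → ℕ → Λ) (n : ℕ)
    (hδ : ∀ a b c d, a < b → b < c → c < d → d < n → M a b < M c d)
    (hε : ∀ a b c d, a < b → b < c → c < d → d < n → M a c < M b d)
    (hγ : ∀ a b c, a < b → b < c → c < n → M a b < M b c)
    (t : Fin 4)
    (ht : ((t = 0 ∨ t = 2) ∧ (∀ a b c d, a < b → b < c → c < d → d < n → M a d < M b c) ∧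
          (∀ a b c, a < b → b < c → c < n → M a c < M b c)) ∨
         ((t = 1 ∨ t = 3) ∧ (∀ a b c d, a < b → b < c → c < d → d < n → M b c < M a d) ∧
          (∀ a b c, a < b → b < c → c < n → M a b < M a c)))
    (h0 : t = 0 → ∀ a b c, a < b → b < c → c < n → M a b < M a c)
    (h2 : t = 2 → ∀ a b c, a < b → b < c → c < n → M a c < M a b)
    (h1 : t = 1 → ∀ a b c, a < b → b < c → c < n → M a c < M b c)
    (h3 : t = 3 → ∀ a b c, a < b → b < c → c < n → M b c < M a c) :
    Follows M t n := by
  intro i j k l hij hj hkl hl hC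
  rcases ht with ⟨ht, hζ, hβ⟩ | ⟨ht, hζ, hα⟩
  · have main : i < k → M i j < M k l := by
      intro hik
      rcases lt_trichotomy j k with h | rfl | h
      · exact hδ i j k l hij h hkl hl
      · exact hγ i j l hij hkl hl
      · rcases lt_trichotomy j l with h' | rfl | h'
        · exact hε i k j l hik h h' hl
        · exact hβ i k j hik h hj
        · exact hζ i k l j hik hkl h' hj
    rcases ht with rfl | rfl
    · simp [CanonLt] at hC
      rcases hC with hC | ⟨rfl, hC⟩
      · exact main hC
      · exact h0 rfl i j l hij hC hl
    · simp [CanonLt] at hC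
      rcases hC with hC | ⟨rfl, hC⟩
      · exact main hC
      · exact h2 rfl i l j hkl hC hj
  · have main : j < l → M i j < M k l := by
      intro hjl
      rcases lt_trichotomy i k with hik | rfl | hik
      · rcases lt_trichotomy j k with h | rfl | h
        · exact hδ i j k l hij h hkl hl
        · exact hγ i j l hij hkl hl
        · exact hε i k j l hik h hjl hl
      · exact hα i j l hij hjl hl
      · exact hζ k i j l hik hij hjl hl
    rcases ht with rfl | rfl
    · simp [CanonLt] at hC
      rcases hC with hC | ⟨rfl, hC⟩
      · exact main hC
      · exact h1 rfl i k j hC hkl hj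
    · simp [CanonLt] at hC
      rcases hC with hC | ⟨rfl, hC⟩
      · exact main hC
      · exact h3 rfl k i j hC hij hj

/-- The six pattern values are realised on indices below `m`. -/
structure Pat {Λ : Type*} [LinearOrder Λ] (M : ℕ → ℕ → Λ) (m : ℕ)
    (α β γ δ ε ζ : Prop) : Prop where
  symm : ∀ a b, M a b = M b a
  inj : ∀ a b c d, a < b → b < m → c < d → d < m → M a b = M c d → a = c ∧ b = d
  hα : ∀ a b c, a < b → b < c → c < m → (M a b < M a c ↔ α)
  hβ : ∀ a b c, a < b → b < c → c < m → (M a c < M b c ↔ β)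
  hγ : ∀ a b c, a < b → b < c → c < m → (M a b < M b c ↔ γ)
  hδ : ∀ a b c d, a < b → b < c → c < d → d < m → (M a b < M c d ↔ δ)
  hε : ∀ a b c d, a < b → b < c → c < d → d < m → (M a c < M b d ↔ ε)
  hζ : ∀ a b c d, a < b → b < c → c < d → d < m → (M a d < M b c ↔ ζ)

theorem Pat.flip_lt {Λ : Type*} [LinearOrder Λ] {M : ℕ → ℕ → Λ} {m : ℕ}
    {α β γ δ ε ζ : Prop} (P : Pat M m α β γ δ ε ζ) {a b c d : ℕ} (hab : a < b) (hb : b < m)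
    (hcd : c < d) (hd : d < m) (hne : ¬ (a = c ∧ b = d)) : M c d < M a b ↔ ¬ (M a b < M c d) := by
  constructor
  · exact fun h => lt_asymm h
  · intro h
    exact lt_of_le_of_ne (not_lt.1 h) fun e => hne (P.inj a b c d hab hb hcd hd e.symm)

theorem Pat.reverse {Λ : Type*} [LinearOrder Λ] {M : ℕ → ℕ → Λ} {m : ℕ}
    {α β γ δ ε ζ : Prop} (P : Pat M m α β γ δ ε ζ) :
    Pat (fun a b => M (m - 1 - a) (m - 1 - b)) m (¬ β) (¬ α) (¬ γ) (¬ δ) (¬ ε) ζ where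
  symm a b := P.symm _ _
  inj a b c d hab hb hcd hd h := by
    rw [P.symm, P.symm (m - 1 - c)] at h
    have := P.inj _ _ _ _ (by omega) (by omega) (by omega) (by omega) h
    omega
  hα a b c hab hbc hc := by
    rw [P.symm _ (m - 1 - b), P.symm _ (m - 1 - c),
      P.flip_lt (by omega) (by omega) (by omega) (by omega) (by omega),
      P.hβ _ _ _ (by omega) (by omega) (by omega)]
  hβ a b c hab hbc hc := by
    rw [P.symm _ (m - 1 - c), P.symm _ (m - 1 - c),
      P.flip_lt (by omega) (by omega) (by omega) (by omega) (by omega),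
      P.hα _ _ _ (by omega) (by omega) (by omega)]
  hγ a b c hab hbc hc := by
    rw [P.symm _ (m - 1 - b), P.symm _ (m - 1 - c),
      P.flip_lt (by omega) (by omega) (by omega) (by omega) (by omega),
      P.hγ _ _ _ (by omega) (by omega) (by omega)]
  hδ a b c d hab hbc hcd hd := by
    rw [P.symm _ (m - 1 - b), P.symm _ (m - 1 - d),
      P.flip_lt (by omega) (by omega) (by omega) (by omega) (by omega),
      P.hδ _ _ _ _ (by omega) (by omega) (by omega) (by omega)]
  hε a b c d hab hbc hcd hd := by
    rw [P.symm _ (m - 1 - c), P.symm _ (m - 1 - d),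
      P.flip_lt (by omega) (by omega) (by omega) (by omega) (by omega),
      P.hε _ _ _ _ (by omega) (by omega) (by omega) (by omega)]
  hζ a b c d hab hbc hcd hd := by
    rw [P.symm _ (m - 1 - d), P.symm _ (m - 1 - c),
      P.hζ _ _ _ _ (by omega) (by omega) (by omega) (by omega)]

theorem Pat.follows {Λ : Type*} [LinearOrder Λ] {M : ℕ → ℕ → Λ} {m : ℕ} (hm : 6 ≤ m)
    {α β γ δ ε ζ : Prop} (P : Pat M m α β γ δ ε ζ) (h : δ) (t : Fin 4)
    (t0 : t = 0 → ζ ∧ α) (t2 : t = 2 → ζ ∧ ¬ α) (t1 : t = 1 → ¬ ζ ∧ β) (t3 : t = 3 → ¬ ζ ∧ ¬ β) :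
    Follows M t m := by
  have hγ : γ := by
    by_contra hg
    have e1 := mt (P.hγ 0 1 2 (by omega) (by omega) (by omega)).1 hg
    have e2 := mt (P.hγ 1 2 3 (by omega) (by omega) (by omega)).1 hg
    have e3 := (P.hδ 0 1 2 3 (by omega) (by omega) (by omega) (by omega)).2 h
    order
  have hε : ε := by
    by_contra hg
    have e1 := mt (P.hε 0 1 2 3 (by omega) (by omega) (by omega) (by omega)).1 hg
    have e2 := mt (P.hε 1 2 3 4 (by omega) (by omega) (by omega) (by omega)).1 hg
    have e4 := mt (P.hε 2 3 4 5 (by omega) (by omega) (by omega) (by omega)).1 hg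
    have e3 := (P.hδ 0 2 3 5 (by omega) (by omega) (by omega) (by omega)).2 h
    order
  have hβ : ζ → β := by
    intro hz
    by_contra hg
    have e1 := mt (P.hβ 0 1 3 (by omega) (by omega) (by omega)).1 hg
    have e2 := (P.hζ 0 1 2 3 (by omega) (by omega) (by omega) (by omega)).2 hz
    have e3 := mt (P.hβ 0 1 2 (by omega) (by omega) (by omega)).1 hg
    have e4 := (P.hε 0 1 2 3 (by omega) (by omega) (by omega) (by omega)).2 hε
    order
  have hα : ¬ ζ → α := by
    intro hz
    by_contra hg
    have e1 := mt (P.hα 0 1 3 (by omega) (by omega) (by omega)).1 hg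
    have e2 := mt (P.hζ 0 1 2 3 (by omega) (by omega) (by omega) (by omega)).1 hz
    have e3 := (P.hγ 0 1 2 (by omega) (by omega) (by omega)).2 hγ
    order
  have key : ((t = 0 ∨ t = 2) ∧ ζ) ∨ ((t = 1 ∨ t = 3) ∧ ¬ ζ) := by
    have : t = 0 ∨ t = 1 ∨ t = 2 ∨ t = 3 := by omega
    tauto
  have A : α → ∀ a b c, a < b → b < c → c < m → M a b < M a c :=
    fun p a b c h1 h2 h3 => (P.hα a b c h1 h2 h3).2 p
  have A' : ¬ α → ∀ a b c, a < b → b < c → c < m → M a c < M a b :=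
    fun p a b c h1 h2 h3 => (P.flip_lt (by omega) (by omega) (by omega) (by omega) (by omega)).2
      (mt (P.hα a b c h1 h2 h3).1 p)
  have B : β → ∀ a b c, a < b → b < c → c < m → M a c < M b c :=
    fun p a b c h1 h2 h3 => (P.hβ a b c h1 h2 h3).2 p
  have B' : ¬ β → ∀ a b c, a < b → b < c → c < m → M b c < M a c :=
    fun p a b c h1 h2 h3 => (P.flip_lt (by omega) (by omega) (by omega) (by omega) (by omega)).2
      (mt (P.hβ a b c h1 h2 h3).1 p)
  have Z : ζ → ∀ a b c d, a < b → b < c → c < d → d < m → M a d < M b c :=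
    fun p a b c d h1 h2 h3 h4 => (P.hζ a b c d h1 h2 h3 h4).2 p
  have Z' : ¬ ζ → ∀ a b c d, a < b → b < c → c < d → d < m → M b c < M a d :=
    fun p a b c d h1 h2 h3 h4 =>
      (P.flip_lt (by omega) (by omega) (by omega) (by omega) (by omega)).2
      (mt (P.hζ a b c d h1 h2 h3 h4).1 p)
  refine follows_asc M m (fun a b c d h1 h2 h3 h4 => (P.hδ a b c d h1 h2 h3 h4).2 h)
    (fun a b c d h1 h2 h3 h4 => (P.hε a b c d h1 h2 h3 h4).2 hε)
    (fun a b c h1 h2 h3 => (P.hγ a b c h1 h2 h3).2 hγ) t ?_ ?_ ?_ ?_ ?_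
  · rcases key with ⟨k, hz⟩ | ⟨k, hz⟩
    · exact Or.inl ⟨k, Z hz, B (hβ hz)⟩
    · exact Or.inr ⟨k, Z' hz, A (hα hz)⟩
  · exact fun e => A (t0 e).2
  · exact fun e => A' (t2 e).2
  · exact fun e => B (t1 e).2
  · exact fun e => B' (t3 e).2

theorem exists_type (ζ α β : Prop) : ∃ t : Fin 4, (t = 0 → ζ ∧ α) ∧ (t = 2 → ζ ∧ ¬ α) ∧
    (t = 1 → ¬ ζ ∧ β) ∧ (t = 3 → ¬ ζ ∧ ¬ β) := by
  by_cases hz : ζ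
  · by_cases ha : α
    · exact ⟨0, by simp [hz, ha]⟩
    · exact ⟨2, by simp [hz, ha]⟩
  · by_cases ha : β
    · exact ⟨1, by simp [hz, ha]⟩
    · exact ⟨3, by simp [hz, ha]⟩

/-- Canonical Ramsey theorem for edge orders of the complete graph on `ℕ`. -/
theorem exists_canonical {Λ : Type*} [LinearOrder Λ] (M : ℕ → ℕ → Λ)
    (symm : ∀ a b, M a b = M b a)
    (inj : ∀ a b c d, a < b → c < d → M a b = M c d → a = c ∧ b = d) :
    ∃ t : Fin 4, ∀ n, ∃ y : ℕ → ℕ, (∀ i j, i < n → j < n → y i = y j → i = j) ∧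
      Follows (fun i j => M (y i) (y j)) t n := by
  have E := (Ev4.decided fun a b c _ => M a b < M a c).and <|
    (Ev4.decided fun a b c _ => M a c < M b c).and <|
    (Ev4.decided fun a b c _ => M a b < M b c).and <|
    (Ev4.decided fun a b c d => M a b < M c d).and <|
    (Ev4.decided fun a b c d => M a c < M b d).and
    (Ev4.decided fun a b c d => M a d < M b c)
  generalize Ev4 (fun a b c _ => M a b < M a c) = α at E
  generalize Ev4 (fun a b c _ => M a c < M b c) = β at E
  generalize Ev4 (fun a b c _ => M a b < M b c) = γ at E
  generalize Ev4 (fun a b c d => M a b < M c d) = δ at E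
  generalize Ev4 (fun a b c d => M a c < M b d) = ε at E
  generalize Ev4 (fun a b c d => M a d < M b c) = ζ at E
  have H : ∀ m, ∃ x : ℕ → ℕ, (∀ i j, i < j → j < m → x i < x j) ∧
      Pat (fun i j => M (x i) (x j)) m α β γ δ ε ζ := by
    intro m
    obtain ⟨x, hx, hQ⟩ := E.exists_seq (m + 1)
    have hx' : ∀ i j, i < m → j < m → x i = x j → i = j := by
      intro i j hi hj e
      rcases lt_trichotomy i j with h | h | h
      · have := hx i j h (by omega); omega
      · exact h
      · have := hx j i h (by omega); omega
    refine ⟨x, fun i j h h' => hx i j h (by omega), fun a b => symm _ _, ?_, ?_, ?_, ?_, ?_, ?_, ?_⟩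
    · intro a b c d hab hb hcd hd e
      have := inj _ _ _ _ (hx a b hab (by omega)) (hx c d hcd (by omega)) e
      exact ⟨hx' _ _ (by omega) (by omega) this.1, hx' _ _ (by omega) (by omega) this.2⟩
    · intro a b c h1 h2 h3
      exact (hQ a b c m h1 h2 h3 (by omega)).1
    · intro a b c h1 h2 h3
      exact (hQ a b c m h1 h2 h3 (by omega)).2.1
    · intro a b c h1 h2 h3
      exact (hQ a b c m h1 h2 h3 (by omega)).2.2.1
    · intro a b c d h1 h2 h3 h4
      exact (hQ a b c d h1 h2 h3 (by omega)).2.2.2.1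
    · intro a b c d h1 h2 h3 h4
      exact (hQ a b c d h1 h2 h3 (by omega)).2.2.2.2.1
    · intro a b c d h1 h2 h3 h4
      exact (hQ a b c d h1 h2 h3 (by omega)).2.2.2.2.2
  by_cases hδ : δ
  · obtain ⟨t, t0, t2, t1, t3⟩ := exists_type ζ α β
    refine ⟨t, fun n => ?_⟩
    obtain ⟨x, hx, P⟩ := H (n + 6)
    refine ⟨x, ?_, ?_⟩
    · intro i j hi hj e
      rcases lt_trichotomy i j with h | h | h
      · have := hx i j h (by omega); omega
      · exact h
      · have := hx j i h (by omega); omega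
    · have := P.follows (by omega) hδ t t0 t2 t1 t3
      exact fun i j k l h1 h2 h3 h4 h5 => this i j k l h1 (by omega) h3 (by omega) h5
  · obtain ⟨t, t0, t2, t1, t3⟩ := exists_type ζ (¬ β) (¬ α)
    refine ⟨t, fun n => ?_⟩
    obtain ⟨x, hx, P⟩ := H (n + 6)
    refine ⟨fun i => x (n + 6 - 1 - i), ?_, ?_⟩
    · intro i j hi hj e
      simp only [] at e
      rcases lt_trichotomy i j with h | h | h
      · have := hx (n + 6 - 1 - j) (n + 6 - 1 - i) (by omega) (by omega); omega
      · exact h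
      · have := hx (n + 6 - 1 - i) (n + 6 - 1 - j) (by omega) (by omega); omega
    · have := P.reverse.follows (by omega) hδ t t0 t2 t1 t3
      exact fun i j k l h1 h2 h3 h4 h5 => this i j k l h1 (by omega) h3 (by omega) h5

/-- Comparison of edges `{a,b}`, `{c,d}` of `canonK t n` in terms of `CanonLt`. -/
theorem canonK_label_iff {Λ : Type*} [LinearOrder Λ] {t : Fin 4} {n : ℕ} (M : ℕ → ℕ → Λ)
    (symm : ∀ a b, M a b = M b a) (hM : Follows M t n)
    (a b c d : Fin n) (hab : a ≠ b) (hcd : c ≠ d) :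
    (canonK t n).label s(a, b) < (canonK t n).label s(c, d) ↔ M a b < M c d := by
  have main : ∀ a b c d : Fin n, a < b → c < d →
      ((canonK t n).label s(a, b) < (canonK t n).label s(c, d) ↔ M a b < M c d) := by
    intro a b c d hab hcd
    have one : ∀ a b c d : Fin n, a < b → c < d → CanonLt t a b c d →
        (canonK t n).label s(a, b) < (canonK t n).label s(c, d) := by
      intro a b c d hab hcd h
      have := h.label hab b.2 hcd d.2
      simpa only [canonK, symLabel, Sym2.lift_mk, min_eq_left hab.le, max_eq_right hab.le,
        min_eq_left hcd.le, max_eq_right hcd.le] using this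
    rcases CanonLt.total t a b c d with h | h | ⟨h, h'⟩
    · exact iff_of_true (one _ _ _ _ hab hcd h) (hM _ _ _ _ hab b.2 hcd d.2 h)
    · exact iff_of_false (lt_asymm (one _ _ _ _ hcd hab h))
        (lt_asymm (hM _ _ _ _ hcd d.2 hab b.2 h))
    · have := Fin.ext h
      have := Fin.ext h'
      subst_vars
      simp
  rcases lt_or_gt_of_ne hab with h | h <;> rcases lt_or_gt_of_ne hcd with h' | h'
  · exact main _ _ _ _ h h'
  · rw [symm c]
    have e : (canonK t n).label s(c, d) = (canonK t n).label s(d, c) :=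
      congrArg (canonK t n).label Sym2.eq_swap
    rw [e]
    exact main _ _ _ _ h h'
  · rw [symm a]
    have e : (canonK t n).label s(a, b) = (canonK t n).label s(b, a) :=
      congrArg (canonK t n).label Sym2.eq_swap
    rw [e]
    exact main _ _ _ _ h h'
  · rw [symm a, symm c]
    have e : (canonK t n).label s(a, b) = (canonK t n).label s(b, a) :=
      congrArg (canonK t n).label Sym2.eq_swap
    have e' : (canonK t n).label s(c, d) = (canonK t n).label s(d, c) :=
      congrArg (canonK t n).label Sym2.eq_swap
    rw [e, e']
    exact main _ _ _ _ h h'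

theorem canonK_valid (t : Fin 4) (n : ℕ) : (canonK t n).Valid := by
  have one : ∀ a b c d : Fin n, a < b → c < d → CanonLt t a b c d →
      (canonK t n).label s(a, b) < (canonK t n).label s(c, d) := by
    intro a b c d hab hcd h
    have := h.label hab b.2 hcd d.2
    simpa only [canonK, symLabel, Sym2.lift_mk, min_eq_left hab.le, max_eq_right hab.le,
      min_eq_left hcd.le, max_eq_right hcd.le] using this
  have main : ∀ a b c d : Fin n, a < b → c < d →
      (canonK t n).label s(a, b) = (canonK t n).label s(c, d) → s(a, b) = s(c, d) := by
    intro a b c d hab hcd e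
    rcases CanonLt.total t a b c d with h | h | ⟨h, h'⟩
    · exact absurd e (one _ _ _ _ hab hcd h).ne
    · exact absurd e (one _ _ _ _ hcd hab h).ne'
    · rw [Fin.ext h, Fin.ext h']
  have ex : ∀ e ∈ (canonK t n).graph.edgeSet, ∃ a b : Fin n, a < b ∧ e = s(a, b) := by
    intro e
    induction e using Sym2.ind with
    | _ a b =>
      intro h
      have hab : a ≠ b := by
        have h' : (canonK t n).graph.Adj a b := h
        exact h'.ne
      rcases lt_or_gt_of_ne hab with h | h
      · exact ⟨a, b, h, rfl⟩
      · exact ⟨b, a, h, Sym2.eq_swap⟩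
  intro e he f hf
  obtain ⟨a, b, hab, rfl⟩ := ex e he
  obtain ⟨c, d, hcd, rfl⟩ := ex f hf
  exact main a b c d hab hcd

/-- The labels of a sequence of labelings, extended to all naturals. -/
def extLab (L : ∀ N : ℕ, Sym2 (Fin N) → ℕ) (a b N : ℕ) : ℕ :=
  if h : a < N ∧ b < N then L N s(⟨a, h.1⟩, ⟨b, h.2⟩) else 0

open Filter in
theorem canonical_of_canAvoid (F : Set EOGraph)
    (h : ∀ N : ℕ, CanAvoid (⊤ : SimpleGraph (Fin N)) F) :
    ∃ t : Fin 4, ∀ n : ℕ, (canonK t n).AvoidsFam F := by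
  choose L hV hA using h
  let M : ℕ → ℕ → Germ (hyperfilter ℕ : Filter ℕ) ℕ := fun a b => ((extLab L a b : ℕ → ℕ) : Germ _ ℕ)
  have large : ∀ a : ℕ, ∀ᶠ N in (hyperfilter ℕ : Filter ℕ), a < N := fun a =>
    Nat.hyperfilter_le_atTop (eventually_gt_atTop a)
  have symm' : ∀ a b N, extLab L a b N = extLab L b a N := by
    intro a b N
    unfold extLab
    by_cases h : a < N ∧ b < N
    · rw [dif_pos h, dif_pos h.symm, Sym2.eq_swap]
    · rw [dif_neg h, dif_neg fun h' => h h'.symm]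
  have symm : ∀ a b, M a b = M b a := by
    intro a b
    have : extLab L a b = extLab L b a := funext (symm' a b)
    simp only [M, this]
  have inj : ∀ a b c d, a < b → c < d → M a b = M c d → a = c ∧ b = d := by
    intro a b c d hab hcd e
    have e' : ∀ᶠ N in (hyperfilter ℕ : Filter ℕ), extLab L a b N = extLab L c d N :=
      Germ.coe_eq.1 e
    obtain ⟨N, hN, hb, hd⟩ := (e'.and ((large b).and (large d))).exists
    unfold extLab at hN
    rw [dif_pos ⟨by omega, hb⟩, dif_pos ⟨by omega, hd⟩] at hN
    have := hV N _ (by simp; omega) _ (by simp; omega) hN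
    simp at this
    omega
  obtain ⟨t, ht⟩ := exists_canonical M symm inj
  refine ⟨t, fun n H hH => ?_⟩
  rintro ⟨f, -, hf⟩
  obtain ⟨y, hy, hF⟩ := ht n
  have e1 : ∀ᶠ N in (hyperfilter ℕ : Filter ℕ), ∀ i : Fin n, y i < N :=
    eventually_all.2 fun i => large _
  have e2 : ∀ᶠ N in (hyperfilter ℕ : Filter ℕ), ∀ i j k l : Fin n, i < j → k < l →
      CanonLt t i j k l → extLab L (y i) (y j) N < extLab L (y k) (y l) N := by
    simp only [eventually_all, eventually_imp_distrib_left]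
    intro i j k l hij hkl hC
    exact Germ.coe_lt.1 (hF i j k l hij j.2 hkl l.2 hC)
  obtain ⟨N, h1, h2⟩ := (e1.and e2).exists
  have hFN : Follows (fun i j => extLab L (y i) (y j) N) t n := by
    intro i j k l hij hj hkl hl hC
    exact h2 ⟨i, by omega⟩ ⟨j, hj⟩ ⟨k, by omega⟩ ⟨l, hl⟩ hij hkl hC
  refine hA N H hH ⟨⟨fun v => ⟨y (f v), h1 (f v)⟩, ?_⟩, ?_, ?_⟩
  · intro v w e
    have e : y (f v) = y (f w) := by simpa using e
    exact f.injective (Fin.ext (hy _ _ (f v).2 (f w).2 e))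
  · intro a b hab
    have hne : f a ≠ f b := fun e => hab.ne (f.injective e)
    show _ ≠ _
    intro e
    have e : y (f a) = y (f b) := congrArg Fin.val e
    exact hne (Fin.ext (hy _ _ (f a).2 (f b).2 e))
  · intro a b c d hab hcd
    rw [hf a b c d hab hcd, canonK_label_iff _ (fun a b => symm' _ _ N) hFN _ _ _ _
      (fun e => hab.ne (f.injective e)) (fun e => hcd.ne (f.injective e))]
    simp only [extLab]
    rw [dif_pos ⟨h1 (f a), h1 (f b)⟩, dif_pos ⟨h1 (f c), h1 (f d)⟩]
    rfl

/-- The order chromatic number of a family `F` of edge-ordered graphs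
is infinite if and only if one of the four canonical edge-orders of `K_n` avoids `F`
for all `n`. -/
theorem orderChrom_eq_top_iff_canonical (F : Set EOGraph)
    (hval : ∀ H ∈ F, H.Valid) (hne : ∀ H ∈ F, H.graph.edgeSet.Nonempty) :
    orderChrom F = ⊤ ↔ ∃ t : Fin 4, ∀ n : ℕ, (canonK t n).AvoidsFam F := by
  constructor
  · intro h
    apply canonical_of_canAvoid
    intro N
    by_contra hN
    simp only [orderChrom, iInf_eq_top] at h
    have h1 := h N ⊤ hN
    have h2 := SimpleGraph.chromaticNumber_ne_top_iff_exists.2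
      ⟨_, (⊤ : SimpleGraph (Fin N)).colorable_of_fintype⟩
    exact h2 h1
  · rintro ⟨t, ht⟩
    simp only [orderChrom, iInf_eq_top]
    intro n G hG
    refine absurd ⟨(canonK t n).label, ?_, ?_⟩ hG
    · intro e he f hf
      have hle : G.edgeSet ⊆ (⊤ : SimpleGraph (Fin n)).edgeSet :=
        SimpleGraph.edgeSet_mono le_top
      exact canonK_valid t n e (hle he) f (hle hf)
    · rintro H hH ⟨f, hf1, hf2⟩
      refine ht n H hH ⟨f, ?_, hf2⟩
      intro a b hab
      exact (hf1 a b hab).ne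
end

section
/- For any k ≥ 2 and any family 𝓗 of edge-ordered graphs, the order chromatic number satisfies χ'_<(𝓗) > k if and only if for every n ≥ 3 there exists a canonical edge-order of the complete k-partite graph K_{k×n} (with n vertices in each class) that avoids 𝓗. -/
/-- The complete `k`-partite graph `K_{k×n}` on vertex set `Fin (k*n)`: the class of a
vertex `v` is `v / n` and its index within the class is `v % n`; two vertices are
adjacent iff they lie in different classes. -/
def multiK (k n : ℕ) : SimpleGraph (Fin (k * n)) :=
  SimpleGraph.fromRel fun a b => (a : ℕ) / n ≠ (b : ℕ) / n

/-- `key n b j` is `j` or the order-reversal `n - 1 - j`, used to encode the `±` signs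
in the canonical labelings. -/
def key (n : ℕ) (b : Bool) (j : ℕ) : ℕ := if b then j else n - 1 - j

/-- The edge-order given by `L` is canonical on the part of `K_{k×n}` between classes
`c1` and `c2`: for one of the two choices `(p, q)` of primary/secondary class and some
signs `b1 b2`, edges are ordered as by one of the eight labelings `±n·j1 ± j2`,
`±n·j2 ± j1`. -/
def PartCanonical (k n : ℕ) (L : Sym2 (Fin (k * n)) → ℕ) (c1 c2 : ℕ) : Prop :=
  ∃ p q : ℕ, ((p, q) = (c1, c2) ∨ (p, q) = (c2, c1)) ∧ ∃ b1 b2 : Bool,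
    ∀ u v u' v' : Fin (k * n),
      (u : ℕ) / n = p → (v : ℕ) / n = q → (u' : ℕ) / n = p → (v' : ℕ) / n = q →
      (L s(u, v) < L s(u', v') ↔
        n * key n b1 ((u : ℕ) % n) + key n b2 ((v : ℕ) % n) <
        n * key n b1 ((u' : ℕ) % n) + key n b2 ((v' : ℕ) % n))

/-- The part of `K_{k×n}` between classes `c1, c2` precedes the part between classes
`d1, d2` in the edge-order `L`: every edge of the former is smaller than every edge of
the latter. -/
def PartPrecedes (k n : ℕ) (L : Sym2 (Fin (k * n)) → ℕ) (c1 c2 d1 d2 : ℕ) : Prop :=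
  ∀ u v u' v' : Fin (k * n),
    (u : ℕ) / n = c1 → (v : ℕ) / n = c2 → (u' : ℕ) / n = d1 → (v' : ℕ) / n = d2 →
    L s(u, v) < L s(u', v')

/-- The parts of `K_{k×n}` between classes `c, c2` and between classes `c, c4` (sharing
the class `c`) are interleaved in the edge-order `L`: the relative order of an edge of
the first part and an edge of the second part is decided by comparing the indices of
their endpoints in the shared class, in one of the four possible ways. -/
def PartsInterleaved (k n : ℕ) (L : Sym2 (Fin (k * n)) → ℕ) (c c2 c4 : ℕ) : Prop :=
  ∃ m : Fin 4,
    ∀ u v u' v' : Fin (k * n),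
      (u : ℕ) / n = c → (v : ℕ) / n = c2 → (u' : ℕ) / n = c → (v' : ℕ) / n = c4 →
      (L s(u, v) < L s(u', v') ↔
        ![(u : ℕ) % n < (u' : ℕ) % n, (u : ℕ) % n ≤ (u' : ℕ) % n,
          (u' : ℕ) % n < (u : ℕ) % n, (u' : ℕ) % n ≤ (u : ℕ) % n] m)

/-- `L` is a canonical edge-order of `K_{k×n}`: it induces a canonical edge-ordering on
every part and for every two distinct parts, either one precedes the other or they are
interleaved (the latter only possible for parts sharing a class). -/
def CanonicalMulti (k n : ℕ) (L : Sym2 (Fin (k * n)) → ℕ) : Prop :=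
  (∀ c1 c2 : ℕ, c1 < c2 → c2 < k → PartCanonical k n L c1 c2) ∧
  (∀ c1 c2 d1 d2 : ℕ, c1 < c2 → c2 < k → d1 < d2 → d2 < k → (c1, c2) ≠ (d1, d2) →
    PartPrecedes k n L c1 c2 d1 d2 ∨ PartPrecedes k n L d1 d2 c1 c2 ∨
    (∃ s e1 e2 : ℕ, ({c1, c2} : Set ℕ) = {s, e1} ∧ ({d1, d2} : Set ℕ) = {s, e2} ∧
      PartsInterleaved k n L s e1 e2))

theorem multiK_adj (k n : ℕ) (a b : Fin (k * n)) :
    (multiK k n).Adj a b ↔ (a : ℕ) / n ≠ (b : ℕ) / n := by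
  unfold multiK
  rw [SimpleGraph.fromRel_adj]
  constructor
  · rintro ⟨_, h | h⟩
    · exact h
    · exact h.symm
  · intro h
    refine ⟨?_, Or.inl h⟩
    rintro rfl
    exact h rfl

theorem pullback_valid {m M : ℕ} (G : SimpleGraph (Fin m)) (G' : SimpleGraph (Fin M))
    (e : Fin m ↪ Fin M) (he : ∀ a b, G.Adj a b → G'.Adj (e a) (e b))
    (L : Sym2 (Fin M) → ℕ) (hL : (EOGraph.mk M G' L).Valid) :
    (EOGraph.mk m G (L ∘ Sym2.map e)).Valid := by
  intro x hx y hy hxy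
  apply Sym2.map.injective e.injective
  apply hL
  · induction x with | _ a b => exact he a b hx
  · induction y with | _ a b => exact he a b hy
  · exact hxy

theorem pullback_avoids {m M : ℕ} (G : SimpleGraph (Fin m)) (G' : SimpleGraph (Fin M))
    (e : Fin m ↪ Fin M) (he : ∀ a b, G.Adj a b → G'.Adj (e a) (e b))
    (L : Sym2 (Fin M) → ℕ) (F : Set EOGraph) (hL : (EOGraph.mk M G' L).AvoidsFam F) :
    (EOGraph.mk m G (L ∘ Sym2.map e)).AvoidsFam F := by
  intro H hH hc
  obtain ⟨f, h1, h2⟩ := hc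
  refine hL H hH ⟨f.trans e, fun a b hab => he _ _ (h1 a b hab), ?_⟩
  intro a b c d hab hcd
  exact h2 a b c d hab hcd

/-- Sequence construction. -/
theorem exists_seq_finset (Q : Finset ℕ → ℕ → Prop) (h : ∀ s, ∃ y, Q s y) :
    ∃ (f : ℕ → ℕ) (S : ℕ → Finset ℕ), (∀ n, Q (S n) (f n)) ∧ ∀ m n, m < n → f m ∈ S n := by
  choose Y hY using h
  let S : ℕ → Finset ℕ := fun n => Nat.rec ∅ (fun _ s => insert (Y s) s) n
  have hS : ∀ n, S (n + 1) = insert (Y (S n)) (S n) := fun n => rfl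
  refine ⟨fun n => Y (S n), S, fun n => hY _, ?_⟩
  intro m n hmn
  induction n with
  | zero => omega
  | succ n ih =>
    rw [hS]
    rcases Nat.lt_succ_iff_lt_or_eq.mp hmn with h | h
    · exact Finset.mem_insert_of_mem (ih h)
    · subst h
      exact Finset.mem_insert_self _ _

theorem ultra_color {κ : Type*} [Finite κ] (U : Ultrafilter ℕ) (g : ℕ → κ) :
    ∃ c, ∀ᶠ x in (U : Filter ℕ), g x = c := by
  by_contra! h
  have h2 : ∀ c, ∀ᶠ x in (U : Filter ℕ), g x ≠ c := by
    intro c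
    exact h c
  have h3 := Filter.eventually_all.mpr h2
  obtain ⟨x, hx⟩ := h3.exists
  exact hx _ rfl

theorem ramsey4 {κ : Type*} [Finite κ] (c : ℕ → ℕ → ℕ → ℕ → κ) :
    ∃ f : ℕ → ℕ, StrictMono f ∧ ∃ c0, ∀ w x y z, w < x → x < y → y < z →
      c (f w) (f x) (f y) (f z) = c0 := by
  let U : Ultrafilter ℕ := Filter.hyperfilter ℕ
  choose c3 h3 using fun a b d => ultra_color U (c a b d)
  choose c2 h2 using fun a b => ultra_color U (c3 a b)
  choose c1 h1 using fun a => ultra_color U (c2 a)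
  obtain ⟨c0, h0⟩ := ultra_color U c1
  obtain ⟨f, S, hf, hS⟩ := exists_seq_finset
    (fun s y => (∀ a ∈ s, a < y) ∧ (∀ a ∈ s, ∀ b ∈ s, ∀ d ∈ s, c a b d y = c3 a b d) ∧
      (∀ a ∈ s, ∀ b ∈ s, c3 a b y = c2 a b) ∧ (∀ a ∈ s, c2 a y = c1 a) ∧ c1 y = c0) (by
    intro s
    have e0 : ∀ᶠ y in (U : Filter ℕ), ∀ a ∈ s, a < y := by
      rw [Filter.eventually_all_finset]
      intro a _
      apply Filter.hyperfilter_le_cofinite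
      rw [Nat.cofinite_eq_atTop]
      exact Filter.eventually_gt_atTop a
    have e1 : ∀ᶠ y in (U : Filter ℕ), ∀ a ∈ s, ∀ b ∈ s, ∀ d ∈ s, c a b d y = c3 a b d := by
      simp only [Filter.eventually_all_finset]
      intro a _ b _ d _
      exact h3 a b d
    have e2 : ∀ᶠ y in (U : Filter ℕ), ∀ a ∈ s, ∀ b ∈ s, c3 a b y = c2 a b := by
      simp only [Filter.eventually_all_finset]
      intro a _ b _
      exact h2 a b
    have e3 : ∀ᶠ y in (U : Filter ℕ), ∀ a ∈ s, c2 a y = c1 a := by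
      simp only [Filter.eventually_all_finset]
      intro a _
      exact h1 a
    exact (e0.and (e1.and (e2.and (e3.and h0)))).exists)
  refine ⟨f, fun m n hmn => (hf n).1 _ (hS m n hmn), c0, ?_⟩
  intro w x y z hwx hxy hyz
  rw [(hf z).2.1 _ (hS _ _ (by omega)) _ (hS _ _ (by omega)) _ (hS _ _ hyz),
    (hf y).2.2.1 _ (hS _ _ (by omega)) _ (hS _ _ (by omega)),
    (hf x).2.2.2.1 _ (hS _ _ (by omega)), (hf w).2.2.2.2]

/-- Two tuples with the same order type factor through the same map. -/
theorem order_type_factor (j j' : Fin 4 → ℕ) (h : ∀ a b, j a < j b ↔ j' a < j' b) :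
    ∃ (t : Fin 4 → Fin 4) (x x' : Fin 4 → ℕ), StrictMono x ∧ StrictMono x' ∧
      j = x ∘ t ∧ j' = x' ∘ t := by
  classical
  let S : Finset ℕ := Finset.univ.image j
  have hcard : S.card ≤ 4 := by
    simpa using (Finset.card_image_le (s := (Finset.univ : Finset (Fin 4))) (f := j))
  obtain ⟨m, hm⟩ : ∃ m, S.card = m := ⟨_, rfl⟩
  rw [hm] at hcard
  let e := S.orderIsoOfFin hm
  have hmem : ∀ a, j a ∈ S := fun a => Finset.mem_image_of_mem j (Finset.mem_univ a)
  let t : Fin 4 → Fin m := fun a => e.symm ⟨j a, hmem a⟩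
  have ht : ∀ a, (e (t a) : ℕ) = j a := by intro a; simp [t]
  have hsurj : ∀ b : Fin m, ∃ a, j a = e b := by
    intro b
    obtain ⟨a, _, ha⟩ := Finset.mem_image.mp (e b).2
    exact ⟨a, ha⟩
  choose σ hσ using hsurj
  have heq : ∀ a b, j a = j b → j' a = j' b := by
    intro a b hab
    have h1 := h a b
    have h2 := h b a
    omega
  have key2 : ∀ g : Fin m → ℕ, StrictMono g → ∃ x : Fin 4 → ℕ, StrictMono x ∧
      ∀ b : Fin m, x ⟨b, by omega⟩ = g b := by
    intro g hg
    refine ⟨fun a => if ha : (a : ℕ) < m then g ⟨a, ha⟩ else (∑ i, g i) + 1 + a, ?_, ?_⟩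
    · intro a b hab
      have hab' : (a : ℕ) < b := hab
      by_cases hb : (b : ℕ) < m
      · have ha : (a : ℕ) < m := by omega
        simp only [ha, hb, dif_pos]
        exact hg hab
      · by_cases ha : (a : ℕ) < m
        · simp only [ha, hb, dif_pos, dif_neg, not_false_eq_true]
          have := Finset.single_le_sum (f := g) (fun i _ => Nat.zero_le _)
            (Finset.mem_univ (⟨a, ha⟩ : Fin m))
          omega
        · simp only [ha, hb, dif_neg, not_false_eq_true]
          omega
    · intro b
      simp
  obtain ⟨x, hx, hx2⟩ := key2 (fun b => (e b : ℕ)) (fun a b hab => e.strictMono hab)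
  obtain ⟨x', hx', hx2'⟩ := key2 (fun b => j' (σ b)) (by
    intro a b hab
    rw [← h, hσ, hσ]
    exact e.strictMono hab)
  refine ⟨fun a => ⟨t a, by omega⟩, x, x', hx, hx', ?_, ?_⟩
  · funext a
    simp only [Function.comp, hx2, ht]
  · funext a
    simp only [Function.comp, hx2']
    apply heq
    rw [hσ, ht]

theorem ramsey_hom {ι : Type*} [Finite ι] (P : ι → (Fin 4 → ℕ) → Prop) :
    ∃ f : ℕ → ℕ, StrictMono f ∧ ∀ i, ∀ j j' : Fin 4 → ℕ, (∀ a b, j a < j b ↔ j' a < j' b) →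
      (P i (f ∘ j) ↔ P i (f ∘ j')) := by
  obtain ⟨f, hf, c0, hc⟩ := ramsey4 (κ := ι → (Fin 4 → Fin 4) → Prop)
    (fun w x y z i t => P i (![w, x, y, z] ∘ t))
  refine ⟨f, hf, ?_⟩
  intro i j j' h
  obtain ⟨t, x, x', hx, hx', rfl, rfl⟩ := order_type_factor j j' h
  have main : ∀ x : Fin 4 → ℕ, StrictMono x → (P i (f ∘ (x ∘ t)) = c0 i t) := by
    intro x hx
    rw [← hc (x 0) (x 1) (x 2) (x 3) (hx (by decide)) (hx (by decide)) (hx (by decide))]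
    have : ![f (x 0), f (x 1), f (x 2), f (x 3)] = f ∘ x := by
      funext a; fin_cases a <;> rfl
    simp only [this]
    rfl
  exact iff_of_eq ((main x hx).trans (main _ hx').symm)

/-- Homogeneous edge-order: comparisons depend only on classes and order type. -/
def HomLabel (k n : ℕ) (L : Sym2 (Fin (k * n)) → ℕ) : Prop :=
  ∀ u v : Fin 4 → Fin (k * n), (∀ a, (u a : ℕ) / n = (v a : ℕ) / n) →
    (∀ a b, u a < u b ↔ v a < v b) →
    (L s(u 0, u 1) < L s(u 2, u 3) ↔ L s(v 0, v 1) < L s(v 2, v 3))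

theorem exists_hom (k n : ℕ) (F : Set EOGraph) (hF : ∀ N, CanAvoid (multiK k N) F) :
    ∃ L : Sym2 (Fin (k * n)) → ℕ, (EOGraph.mk (k * n) (multiK k n) L).Valid ∧
      HomLabel k n L ∧ (EOGraph.mk (k * n) (multiK k n) L).AvoidsFam F := by
  choose L hLv hLa using hF
  let U : Ultrafilter ℕ := Filter.hyperfilter ℕ
  let g : ℕ → ℕ → ℕ → ℕ := fun N a b =>
    if h : a < k * N ∧ b < k * N then L N s(⟨a, h.1⟩, ⟨b, h.2⟩) else 0
  let R : ℕ → (Fin 4 → Fin k) → (Fin 4 → ℕ) → Prop := fun N i x =>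
    g N (i 0 * N + x 0) (i 1 * N + x 1) < g N (i 2 * N + x 2) (i 3 * N + x 3)
  let P : (Fin 4 → Fin k) → (Fin 4 → ℕ) → Prop := fun i x => ∀ᶠ N in (U : Filter ℕ), R N i x
  obtain ⟨f, hf, hP⟩ := ramsey_hom P
  have hcl : ∀ u : Fin (k * n), (u : ℕ) / n < k := fun u =>
    Nat.div_lt_of_lt_mul (lt_of_lt_of_eq u.2 (mul_comm k n))
  let cl : Fin (k * n) → Fin k := fun u => ⟨(u : ℕ) / n, hcl u⟩
  have e1 : ∀ᶠ N in (U : Filter ℕ), ∀ u : Fin 4 → Fin (k * n),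
      (R N (cl ∘ u) (f ∘ (fun a => (u a : ℕ))) ↔ P (cl ∘ u) (f ∘ (fun a => (u a : ℕ)))) := by
    rw [Filter.eventually_all]
    intro u
    by_cases h : P (cl ∘ u) (f ∘ (fun a => (u a : ℕ)))
    · simp only [h, iff_true]
      exact h
    · simp only [h, iff_false]
      exact Ultrafilter.eventually_not.mpr h
  have e2 : ∀ᶠ N in (U : Filter ℕ), f (k * n) < N := by
    apply Filter.hyperfilter_le_cofinite
    rw [Nat.cofinite_eq_atTop]
    exact Filter.eventually_gt_atTop _
  obtain ⟨N, hN1, hN2⟩ := (e1.and e2).exists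
  have hfN : ∀ u : Fin (k * n), f u < N := fun u => lt_trans (hf u.2) hN2
  have hlt : ∀ u : Fin (k * n), (cl u : ℕ) * N + f u < k * N := by
    intro u
    have h1 := (cl u).2
    have h2 := hfN u
    calc (cl u : ℕ) * N + f u < (cl u : ℕ) * N + N := by omega
      _ = ((cl u : ℕ) + 1) * N := by ring
      _ ≤ k * N := Nat.mul_le_mul_right _ h1
  have hdiv : ∀ u : Fin (k * n), ((cl u : ℕ) * N + f u) / N = (u : ℕ) / n := by
    intro u
    have h2 := hfN u
    rw [mul_comm, Nat.mul_add_div (by omega), Nat.div_eq_of_lt h2]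
    rfl
  have hmod : ∀ u : Fin (k * n), ((cl u : ℕ) * N + f u) % N = f u := by
    intro u
    rw [mul_comm, Nat.mul_add_mod, Nat.mod_eq_of_lt (hfN u)]
  let e : Fin (k * n) ↪ Fin (k * N) := ⟨fun u => ⟨(cl u : ℕ) * N + f u, hlt u⟩, by
    intro u v huv
    have h1 : (cl u : ℕ) * N + f u = (cl v : ℕ) * N + f v := congrArg Fin.val huv
    have h2 := hmod u
    rw [h1, hmod v] at h2
    exact Fin.ext (hf.injective h2.symm)⟩
  have he : ∀ a b, (multiK k n).Adj a b → (multiK k N).Adj (e a) (e b) := by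
    intro a b hab
    rw [multiK_adj] at hab ⊢
    change ((cl a : ℕ) * N + f a) / N ≠ ((cl b : ℕ) * N + f b) / N
    rwa [hdiv, hdiv]
  refine ⟨L N ∘ Sym2.map e, pullback_valid _ _ e he _ (hLv N), ?_,
    pullback_avoids _ _ e he _ F (hLa N)⟩
  have hR : ∀ u : Fin 4 → Fin (k * n), (L N ∘ Sym2.map e) s(u 0, u 1) <
      (L N ∘ Sym2.map e) s(u 2, u 3) ↔ R N (cl ∘ u) (f ∘ (fun a => (u a : ℕ))) := by
    intro u
    have hg : ∀ a b : Fin (k * n), g N ((cl a : ℕ) * N + f a) ((cl b : ℕ) * N + f b) =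
        L N s(e a, e b) := by
      intro a b
      simp only [g]
      rw [dif_pos ⟨hlt a, hlt b⟩]
      rfl
    simp only [R, Function.comp, Sym2.map_mk, hg]
  intro u v hc ho
  rw [hR, hR, hN1, hN1]
  have : cl ∘ u = cl ∘ v := by
    funext a
    exact Fin.ext (hc a)
  rw [this]
  exact hP _ _ _ ho

theorem key_lt (n : ℕ) (b : Bool) (j : ℕ) (h : j < n) : key n b j < n := by
  unfold key; split <;> omega

theorem key_lt_iff (n : ℕ) (b : Bool) (j j' : ℕ) (h : j < n) (h' : j' < n) :
    key n b j < key n b j' ↔ if b then j < j' else j' < j := by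
  unfold key; cases b <;> simp <;> omega

theorem key_inj (n : ℕ) (b : Bool) (j j' : ℕ) (h : j < n) (h' : j' < n)
    (he : key n b j = key n b j') : j = j' := by
  unfold key at he; cases b <;> simp at he <;> omega

theorem lex_lt_iff (n x y x' y' : ℕ) (hy : y < n) (hy' : y' < n) :
    n * x + y < n * x' + y' ↔ x < x' ∨ (x = x' ∧ y < y') := by
  constructor
  · intro h
    rcases lt_trichotomy x x' with h1 | h1 | h1
    · exact Or.inl h1
    · subst h1; right; constructor <;> omega
    · exfalso
      have : n * (x' + 1) ≤ n * x := Nat.mul_le_mul_left _ h1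
      rw [mul_add] at this
      omega
  · rintro (h | ⟨rfl, h⟩)
    · have : n * (x + 1) ≤ n * x' := Nat.mul_le_mul_left _ h
      rw [mul_add] at this
      omega
    · omega

/-- Abstract two-dimensional statement, with `A a b` the label of an edge. -/
theorem grid_canonical (n : ℕ) (hn : 2 ≤ n) (A : ℕ → ℕ → ℕ)
    (hinj : ∀ a b a' b', a < n → b < n → a' < n → b' < n → A a b = A a' b' → a = a' ∧ b = b')
    (hom : ∀ a b a' b' c d c' d', a < n → b < n → a' < n → b' < n →
      c < n → d < n → c' < n → d' < n → (a < a' ↔ c < c') → (a' < a ↔ c' < c) →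
      (b < b' ↔ d < d') → (b' < b ↔ d' < d) → (A a b < A a' b' ↔ A c d < A c' d')) :
    ∃ b1 b2 : Bool,
      (∀ a b a' b', a < n → b < n → a' < n → b' < n →
        (A a b < A a' b' ↔ n * key n b1 a + key n b2 b < n * key n b1 a' + key n b2 b')) ∨
      (∀ a b a' b', a < n → b < n → a' < n → b' < n →
        (A a b < A a' b' ↔ n * key n b2 b + key n b1 a < n * key n b2 b' + key n b1 a')) := by
  classical
  have hs1 : ∃ b1 : Bool, ∀ a b a', a < n → b < n → a' < n → key n b1 a < key n b1 a' →
      A a b < A a' b := by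
    by_cases h : A 0 0 < A 1 0
    · refine ⟨true, fun a b a' ha hb ha' hk => ?_⟩
      rw [key_lt_iff n _ _ _ ha ha'] at hk
      simp only [if_true] at hk
      exact (hom 0 0 1 0 a b a' b (by omega) (by omega) (by omega) (by omega) ha hb ha' hb
        (by omega) (by omega) (by omega) (by omega)).mp h
    · refine ⟨false, fun a b a' ha hb ha' hk => ?_⟩
      rw [key_lt_iff n _ _ _ ha ha'] at hk
      simp only [Bool.false_eq_true, if_false] at hk
      have h2 : A 1 0 < A 0 0 := by
        have := hinj 0 0 1 0 (by omega) (by omega) (by omega) (by omega)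
        omega
      exact (hom 1 0 0 0 a b a' b (by omega) (by omega) (by omega) (by omega) ha hb ha' hb
        (by omega) (by omega) (by omega) (by omega)).mp h2
  have hs2 : ∃ b2 : Bool, ∀ a b b', a < n → b < n → b' < n → key n b2 b < key n b2 b' →
      A a b < A a b' := by
    by_cases h : A 0 0 < A 0 1
    · refine ⟨true, fun a b b' ha hb hb' hk => ?_⟩
      rw [key_lt_iff n _ _ _ hb hb'] at hk
      simp only [if_true] at hk
      exact (hom 0 0 0 1 a b a b' (by omega) (by omega) (by omega) (by omega) ha hb ha hb'
        (by omega) (by omega) (by omega) (by omega)).mp h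
    · refine ⟨false, fun a b b' ha hb hb' hk => ?_⟩
      rw [key_lt_iff n _ _ _ hb hb'] at hk
      simp only [Bool.false_eq_true, if_false] at hk
      have h2 : A 0 1 < A 0 0 := by
        have := hinj 0 0 0 1 (by omega) (by omega) (by omega) (by omega)
        omega
      exact (hom 0 1 0 0 a b a b' (by omega) (by omega) (by omega) (by omega) ha hb ha hb'
        (by omega) (by omega) (by omega) (by omega)).mp h2
  obtain ⟨b1, h1⟩ := hs1
  obtain ⟨b2, h2⟩ := hs2
  refine ⟨b1, b2, ?_⟩
  have hpp : ∀ a b a' b', a < n → b < n → a' < n → b' < n → key n b1 a ≤ key n b1 a' →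
      key n b2 b ≤ key n b2 b' → A a b ≤ A a' b' := by
    intro a b a' b' ha hb ha' hb' hx hy
    have l1 : A a b ≤ A a' b := by
      rcases hx.lt_or_eq with hx | hx
      · exact (h1 a b a' ha hb ha' hx).le
      · rw [key_inj n b1 a a' ha ha' hx]
    have l2 : A a' b ≤ A a' b' := by
      rcases hy.lt_or_eq with hy | hy
      · exact (h2 a' b b' ha' hb hb' hy).le
      · rw [key_inj n b2 b b' hb hb' hy]
    exact l1.trans l2
  -- the mixed comparison is constant
  have hmix : (∀ a b a' b', a < n → b < n → a' < n → b' < n → key n b1 a < key n b1 a' →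
        key n b2 b' < key n b2 b → A a b < A a' b') ∨
      (∀ a b a' b', a < n → b < n → a' < n → b' < n → key n b1 a < key n b1 a' →
        key n b2 b' < key n b2 b → A a' b' < A a b) := by
    by_cases hex : ∃ a b a' b', a < n ∧ b < n ∧ a' < n ∧ b' < n ∧ key n b1 a < key n b1 a' ∧
        key n b2 b' < key n b2 b ∧ A a b < A a' b'
    · left
      obtain ⟨a, b, a', b', ha, hb, ha', hb', hx, hy, hA⟩ := hex
      intro c d c' d' hc hd hc' hd' hz hw
      rw [key_lt_iff n _ _ _ ‹_› ‹_›] at hx hy hz hw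
      refine (hom a b a' b' c d c' d' ha hb ha' hb' hc hd hc' hd' ?_ ?_ ?_ ?_).mp hA <;>
      cases b1 <;> cases b2 <;> simp at hx hy hz hw <;> omega
    · right
      intro a b a' b' ha hb ha' hb' hx hy
      by_contra hcon
      apply hex
      refine ⟨a, b, a', b', ha, hb, ha', hb', hx, hy, ?_⟩
      rcases Nat.lt_or_ge (A a b) (A a' b') with h | h
      · exact h
      · have h3 := hinj a b a' b' ha hb ha' hb' (by omega)
        rw [h3.1] at hx
        omega
  rcases hmix with hm | hm
  · left
    intro a b a' b' ha hb ha' hb'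
    rw [lex_lt_iff n _ _ _ _ (key_lt n b2 b hb) (key_lt n b2 b' hb')]
    have fwd : ∀ a b a' b', a < n → b < n → a' < n → b' < n →
        (key n b1 a < key n b1 a' ∨ (key n b1 a = key n b1 a' ∧ key n b2 b < key n b2 b')) →
        A a b < A a' b' := by
      intro a b a' b' ha hb ha' hb' h
      rcases h with h | ⟨h, h'⟩
      · rcases Nat.lt_or_ge (key n b2 b') (key n b2 b) with h' | h'
        · exact hm a b a' b' ha hb ha' hb' h h'
        · exact (h1 a b a' ha hb ha' h).trans_le (hpp a' b a' b' ha' hb ha' hb' le_rfl h')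
      · rw [key_inj n b1 a a' ha ha' h]
        exact h2 a' b b' ha' hb hb' h'
    refine ⟨fun hA => ?_, fwd a b a' b' ha hb ha' hb'⟩
    by_contra hcon
    have h5 := fwd a' b' a b ha' hb' ha hb
    by_cases he : key n b1 a = key n b1 a' ∧ key n b2 b = key n b2 b'
    · rw [key_inj n b1 a a' ha ha' he.1, key_inj n b2 b b' hb hb' he.2] at hA
      omega
    · have := h5 (by omega)
      omega
  · right
    intro a b a' b' ha hb ha' hb'
    rw [lex_lt_iff n _ _ _ _ (key_lt n b1 a ha) (key_lt n b1 a' ha')]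
    have fwd : ∀ a b a' b', a < n → b < n → a' < n → b' < n →
        (key n b2 b < key n b2 b' ∨ (key n b2 b = key n b2 b' ∧ key n b1 a < key n b1 a')) →
        A a b < A a' b' := by
      intro a b a' b' ha hb ha' hb' h
      rcases h with h | ⟨h, h'⟩
      · rcases Nat.lt_or_ge (key n b1 a') (key n b1 a) with h' | h'
        · exact hm a' b' a b ha' hb' ha hb h' h
        · exact (h2 a b b' ha hb hb' h).trans_le (hpp a b' a' b' ha hb' ha' hb' h' le_rfl)
      · rw [key_inj n b2 b b' hb hb' h]
        exact h1 a b' a' ha hb' ha' h'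
    refine ⟨fun hA => ?_, fwd a b a' b' ha hb ha' hb'⟩
    by_contra hcon
    have h5 := fwd a' b' a b ha' hb' ha hb
    by_cases he : key n b1 a = key n b1 a' ∧ key n b2 b = key n b2 b'
    · rw [key_inj n b1 a a' ha ha' he.1, key_inj n b2 b b' hb hb' he.2] at hA
      omega
    · have := h5 (by omega)
      omega

theorem lt_of_div_lt {n a b : ℕ} (h : a / n < b / n) : a < b := by
  by_contra hc
  exact absurd (Nat.div_le_div_right (c := n) (not_lt.mp hc)) (not_le.mpr h)

theorem lt_iff_class {n a b a' b' : ℕ} (ha : a / n = a' / n) (hb : b / n = b' / n)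
    (h : a / n = b / n → (a % n < b % n ↔ a' % n < b' % n)) : a < b ↔ a' < b' := by
  rcases lt_trichotomy (a / n) (b / n) with h1 | h1 | h1
  · exact iff_of_true (lt_of_div_lt h1) (lt_of_div_lt (n := n) (by omega))
  · have e1 := Nat.div_add_mod a n
    have e2 := Nat.div_add_mod b n
    have e3 := Nat.div_add_mod a' n
    have e4 := Nat.div_add_mod b' n
    have h2 := h h1
    rw [← ha] at e3
    rw [← hb, ← h1] at e4
    rw [← h1] at e2
    omega
  · have x1 := lt_of_div_lt h1
    have x2 : b' < a' := lt_of_div_lt (n := n) (by omega)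
    omega

theorem hom_apply {k n : ℕ} {L : Sym2 (Fin (k * n)) → ℕ} (hL : HomLabel k n L)
    (u0 u1 u2 u3 v0 v1 v2 v3 : Fin (k * n))
    (h0 : (u0 : ℕ) / n = (v0 : ℕ) / n) (h1 : (u1 : ℕ) / n = (v1 : ℕ) / n)
    (h2 : (u2 : ℕ) / n = (v2 : ℕ) / n) (h3 : (u3 : ℕ) / n = (v3 : ℕ) / n)
    (d01 : (u0 : ℕ) / n ≠ (u1 : ℕ) / n) (d23 : (u2 : ℕ) / n ≠ (u3 : ℕ) / n)
    (d12 : (u1 : ℕ) / n ≠ (u2 : ℕ) / n) (d03 : (u0 : ℕ) / n ≠ (u3 : ℕ) / n)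
    (c02 : (u0 : ℕ) / n = (u2 : ℕ) / n → (((u0 : ℕ) % n < (u2 : ℕ) % n ↔
      (v0 : ℕ) % n < (v2 : ℕ) % n) ∧ ((u2 : ℕ) % n < (u0 : ℕ) % n ↔
      (v2 : ℕ) % n < (v0 : ℕ) % n)))
    (c13 : (u1 : ℕ) / n = (u3 : ℕ) / n → (((u1 : ℕ) % n < (u3 : ℕ) % n ↔
      (v1 : ℕ) % n < (v3 : ℕ) % n) ∧ ((u3 : ℕ) % n < (u1 : ℕ) % n ↔
      (v3 : ℕ) % n < (v1 : ℕ) % n))) :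
    L s(u0, u1) < L s(u2, u3) ↔ L s(v0, v1) < L s(v2, v3) := by
  refine hL ![u0, u1, u2, u3] ![v0, v1, v2, v3] ?_ ?_
  · intro a
    fin_cases a <;> assumption
  · intro a b
    rw [Fin.lt_def, Fin.lt_def]
    apply lt_iff_class (n := n)
    · fin_cases a <;> assumption
    · fin_cases b <;> assumption
    · fin_cases a <;> fin_cases b <;> simp <;> intro hh <;>
        first
        | exact absurd hh d01 | exact absurd hh.symm d01
        | exact absurd hh d23 | exact absurd hh.symm d23
        | exact absurd hh d12 | exact absurd hh.symm d12
        | exact absurd hh d03 | exact absurd hh.symm d03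
        | exact (c02 hh).1 | exact (c02 hh.symm).2
        | exact (c13 hh).1 | exact (c13 hh.symm).2

/-- The vertex of class `c` and index `j`. -/
def vtx (k n : ℕ) (c j : ℕ) (hc : c < k) (hj : j < n) : Fin (k * n) :=
  ⟨c * n + j, by
    calc c * n + j < c * n + n := by omega
      _ = (c + 1) * n := by ring
      _ ≤ k * n := Nat.mul_le_mul_right _ hc⟩

theorem vtx_div (k n c j : ℕ) (hc : c < k) (hj : j < n) :
    (vtx k n c j hc hj : ℕ) / n = c := by
  simp only [vtx]
  rw [mul_comm, Nat.mul_add_div (by omega), Nat.div_eq_of_lt hj, add_zero]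

theorem vtx_mod (k n c j : ℕ) (hc : c < k) (hj : j < n) :
    (vtx k n c j hc hj : ℕ) % n = j := by
  simp only [vtx]
  rw [mul_comm, Nat.mul_add_mod, Nat.mod_eq_of_lt hj]

theorem eq_vtx (k n c : ℕ) (hc : c < k) (hn : 0 < n) (u : Fin (k * n)) (hu : (u : ℕ) / n = c) :
    u = vtx k n c ((u : ℕ) % n) hc (Nat.mod_lt _ hn) := by
  apply Fin.ext
  simp only [vtx]
  rw [← hu]
  exact (Nat.div_add_mod' _ _).symm

theorem edge_ne {k n : ℕ} {L : Sym2 (Fin (k * n)) → ℕ}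
    (hv : (EOGraph.mk (k * n) (multiK k n) L).Valid) (a b c d : Fin (k * n))
    (hab : (a : ℕ) / n ≠ (b : ℕ) / n) (hcd : (c : ℕ) / n ≠ (d : ℕ) / n)
    (h : L s(a, b) = L s(c, d)) : (a = c ∧ b = d) ∨ (a = d ∧ b = c) := by
  have := hv s(a, b) ((multiK_adj k n a b).mpr hab) s(c, d) ((multiK_adj k n c d).mpr hcd) h
  simpa using this

theorem part_canonical {k n : ℕ} (hn : 3 ≤ n) {L : Sym2 (Fin (k * n)) → ℕ}
    (hv : (EOGraph.mk (k * n) (multiK k n) L).Valid) (hL : HomLabel k n L)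
    (c1 c2 : ℕ) (h12 : c1 < c2) (h2 : c2 < k) : PartCanonical k n L c1 c2 := by
  have h1 : c1 < k := by omega
  let A : ℕ → ℕ → ℕ := fun a b =>
    if h : a < n ∧ b < n then L s(vtx k n c1 a h1 h.1, vtx k n c2 b h2 h.2) else 0
  have hA : ∀ a b (ha : a < n) (hb : b < n),
      A a b = L s(vtx k n c1 a h1 ha, vtx k n c2 b h2 hb) := by
    intro a b ha hb
    simp only [A]
    rw [dif_pos ⟨ha, hb⟩]
  have hA' : ∀ u v : Fin (k * n), (u : ℕ) / n = c1 → (v : ℕ) / n = c2 →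
      L s(u, v) = A ((u : ℕ) % n) ((v : ℕ) % n) := by
    intro u v hu hv
    rw [hA _ _ (Nat.mod_lt _ (by omega)) (Nat.mod_lt _ (by omega)),
      ← eq_vtx k n c1 h1 (by omega) u hu, ← eq_vtx k n c2 h2 (by omega) v hv]
  obtain ⟨b1, b2, h⟩ := grid_canonical n (by omega) A (by
      intro a b a' b' ha hb ha' hb' he
      rw [hA _ _ ha hb, hA _ _ ha' hb'] at he
      rcases edge_ne hv _ _ _ _ (by rw [vtx_div, vtx_div]; omega)
        (by rw [vtx_div, vtx_div]; omega) he with ⟨e1, e2⟩ | ⟨e1, e2⟩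
      · have m1 := congrArg (fun w : Fin (k * n) => (w : ℕ) % n) e1
        have m2 := congrArg (fun w : Fin (k * n) => (w : ℕ) % n) e2
        simp only [vtx_mod] at m1 m2
        exact ⟨m1, m2⟩
      · have m1 := congrArg (fun w : Fin (k * n) => (w : ℕ) / n) e1
        simp only [vtx_div] at m1
        omega) (by
      intro a b a' b' c d c' d' ha hb ha' hb' hc hd hc' hd' x1 x2 x3 x4
      rw [hA _ _ ha hb, hA _ _ ha' hb', hA _ _ hc hd, hA _ _ hc' hd']
      apply hom_apply hL <;> simp only [vtx_div, vtx_mod] <;> omega)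
  rcases h with h | h
  · refine ⟨c1, c2, Or.inl rfl, b1, b2, ?_⟩
    intro u v u' v' hu hv hu' hv'
    rw [hA' u v hu hv, hA' u' v' hu' hv']
    exact h _ _ _ _ (Nat.mod_lt _ (by omega)) (Nat.mod_lt _ (by omega))
      (Nat.mod_lt _ (by omega)) (Nat.mod_lt _ (by omega))
  · refine ⟨c2, c1, Or.inr rfl, b2, b1, ?_⟩
    intro u v u' v' hu hv hu' hv'
    rw [Sym2.eq_swap, hA' v u hv hu, Sym2.eq_swap, hA' v' u' hv' hu']
    exact h _ _ _ _ (Nat.mod_lt _ (by omega)) (Nat.mod_lt _ (by omega))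
      (Nat.mod_lt _ (by omega)) (Nat.mod_lt _ (by omega))

/-- Two parts sharing exactly one class. -/
theorem shared_parts {k n : ℕ} (hn : 3 ≤ n) {L : Sym2 (Fin (k * n)) → ℕ}
    (hv : (EOGraph.mk (k * n) (multiK k n) L).Valid) (hL : HomLabel k n L)
    (s e1 e2 : ℕ) (hs : s < k) (h1 : e1 < k) (h2 : e2 < k) (hs1 : s ≠ e1) (hs2 : s ≠ e2)
    (h12 : e1 ≠ e2) :
    PartPrecedes k n L s e1 s e2 ∨ PartPrecedes k n L s e2 s e1 ∨
      PartsInterleaved k n L s e1 e2 := by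
  have p0 : 0 < n := by omega
  have p1 : 1 < n := by omega
  let C : ℕ → ℕ → Prop := fun a a' => ∃ (ha : a < n) (ha' : a' < n),
    L s(vtx k n s a hs ha, vtx k n e1 0 h1 p0) < L s(vtx k n s a' hs ha', vtx k n e2 0 h2 p0)
  have hC : ∀ u v u' v' : Fin (k * n), (u : ℕ) / n = s → (v : ℕ) / n = e1 → (u' : ℕ) / n = s →
      (v' : ℕ) / n = e2 → ∀ a a', a < n → a' < n → ((u : ℕ) % n < (u' : ℕ) % n ↔ a < a') →
      ((u' : ℕ) % n < (u : ℕ) % n ↔ a' < a) → (L s(u, v) < L s(u', v') ↔ C a a') := by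
    intro u v u' v' hu hv hu' hv' a a' ha ha' x1 x2
    have : C a a' ↔ L s(vtx k n s a hs ha, vtx k n e1 0 h1 p0) <
        L s(vtx k n s a' hs ha', vtx k n e2 0 h2 p0) :=
      ⟨fun ⟨_, _, h⟩ => h, fun h => ⟨_, _, h⟩⟩
    rw [this]
    clear this
    clear C
    apply hom_apply hL <;> (try simp only [vtx_div, vtx_mod]) <;> omega
  have hne : ∀ u v u' v' : Fin (k * n), (u : ℕ) / n = s → (v : ℕ) / n = e1 → (u' : ℕ) / n = s →
      (v' : ℕ) / n = e2 → L s(u, v) ≠ L s(u', v') := by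
    intro u v u' v' hu hv1 hu' hv' he
    rcases edge_ne hv _ _ _ _ (by omega) (by omega) he with ⟨x1, x2⟩ | ⟨x1, x2⟩
    · rw [x2] at hv1; omega
    · rw [x1] at hu; omega
  have tri : ∀ u v u' v' : Fin (k * n), (u : ℕ) / n = s → (v : ℕ) / n = e1 → (u' : ℕ) / n = s →
      (v' : ℕ) / n = e2 →
      ((u : ℕ) % n < (u' : ℕ) % n ∧ (L s(u, v) < L s(u', v') ↔ C 0 1)) ∨
      ((u : ℕ) % n = (u' : ℕ) % n ∧ (L s(u, v) < L s(u', v') ↔ C 0 0)) ∨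
      ((u' : ℕ) % n < (u : ℕ) % n ∧ (L s(u, v) < L s(u', v') ↔ C 1 0)) := by
    intro u v u' v' hu hv hu' hv'
    rcases lt_trichotomy ((u : ℕ) % n) ((u' : ℕ) % n) with h | h | h
    · exact Or.inl ⟨h, hC u v u' v' hu hv hu' hv' 0 1 p0 p1 (by omega) (by omega)⟩
    · exact Or.inr (Or.inl ⟨h, hC u v u' v' hu hv hu' hv' 0 0 p0 p0 (by omega) (by omega)⟩)
    · exact Or.inr (Or.inr ⟨h, hC u v u' v' hu hv hu' hv' 1 0 p1 p0 (by omega) (by omega)⟩)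
  -- values on indices 0, 1
  have e01 : C 0 1 ↔ L s(vtx k n s 0 hs p0, vtx k n e1 0 h1 p0) <
      L s(vtx k n s 1 hs p1, vtx k n e2 0 h2 p0) := ⟨fun ⟨_, _, h⟩ => h, fun h => ⟨_, _, h⟩⟩
  have e10 : C 1 0 ↔ L s(vtx k n s 1 hs p1, vtx k n e1 0 h1 p0) <
      L s(vtx k n s 0 hs p0, vtx k n e2 0 h2 p0) := ⟨fun ⟨_, _, h⟩ => h, fun h => ⟨_, _, h⟩⟩
  have e00 : C 0 0 ↔ L s(vtx k n s 0 hs p0, vtx k n e1 0 h1 p0) <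
      L s(vtx k n s 0 hs p0, vtx k n e2 0 h2 p0) := ⟨fun ⟨_, _, h⟩ => h, fun h => ⟨_, _, h⟩⟩
  have e11 : L s(vtx k n s 1 hs p1, vtx k n e1 0 h1 p0) <
      L s(vtx k n s 1 hs p1, vtx k n e2 0 h2 p0) ↔ C 0 0 :=
    hC _ _ _ _ (vtx_div ..) (vtx_div ..) (vtx_div ..) (vtx_div ..) 0 0 p0 p0
      (by simp) (by simp)
  have n01 := hne (vtx k n s 0 hs p0) (vtx k n e1 0 h1 p0) (vtx k n s 1 hs p1)
    (vtx k n e2 0 h2 p0) (vtx_div ..) (vtx_div ..) (vtx_div ..) (vtx_div ..)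
  have n10 := hne (vtx k n s 1 hs p1) (vtx k n e1 0 h1 p0) (vtx k n s 0 hs p0)
    (vtx k n e2 0 h2 p0) (vtx_div ..) (vtx_div ..) (vtx_div ..) (vtx_div ..)
  by_cases c01 : C 0 1 <;> by_cases c00 : C 0 0 <;> by_cases c10 : C 1 0
  · left
    intro u v u' v' hu hv hu' hv'
    rcases tri u v u' v' hu hv hu' hv' with ⟨_, h⟩ | ⟨_, h⟩ | ⟨_, h⟩
    · exact h.mpr c01
    · exact h.mpr c00
    · exact h.mpr c10
  · right; right
    refine ⟨1, fun u v u' v' hu hv hu' hv' => ?_⟩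
    change _ ↔ (u : ℕ) % n ≤ (u' : ℕ) % n
    have := tri u v u' v' hu hv hu' hv'
    simp only [c01, c00, c10, iff_true, iff_false] at this
    omega
  · exfalso
    simp only [c01, c00, c10, iff_true, iff_false, true_iff, false_iff] at e01 e10 e00 e11
    omega
  · right; right
    refine ⟨0, fun u v u' v' hu hv hu' hv' => ?_⟩
    change _ ↔ (u : ℕ) % n < (u' : ℕ) % n
    have := tri u v u' v' hu hv hu' hv'
    simp only [c01, c00, c10, iff_true, iff_false] at this
    omega
  · right; right
    refine ⟨3, fun u v u' v' hu hv hu' hv' => ?_⟩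
    change _ ↔ (u' : ℕ) % n ≤ (u : ℕ) % n
    have := tri u v u' v' hu hv hu' hv'
    simp only [c01, c00, c10, iff_true, iff_false] at this
    omega
  · exfalso
    simp only [c01, c00, c10, iff_true, iff_false, true_iff, false_iff] at e01 e10 e00 e11
    omega
  · right; right
    refine ⟨2, fun u v u' v' hu hv hu' hv' => ?_⟩
    change _ ↔ (u' : ℕ) % n < (u : ℕ) % n
    have := tri u v u' v' hu hv hu' hv'
    simp only [c01, c00, c10, iff_true, iff_false] at this
    omega
  · right; left
    intro u' v' u v hu' hv' hu hv
    have := tri u v u' v' hu hv hu' hv'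
    have := hne u v u' v' hu hv hu' hv'
    simp only [c01, c00, c10, iff_true, iff_false] at *
    omega

theorem disjoint_parts {k n : ℕ} (hn : 3 ≤ n) {L : Sym2 (Fin (k * n)) → ℕ}
    (hv : (EOGraph.mk (k * n) (multiK k n) L).Valid) (hL : HomLabel k n L)
    (c1 c2 d1 d2 : ℕ) (hc1 : c1 < k) (hc2 : c2 < k) (hd1 : d1 < k) (hd2 : d2 < k)
    (hc : c1 ≠ c2) (hd : d1 ≠ d2) (x11 : c1 ≠ d1) (x12 : c1 ≠ d2) (x21 : c2 ≠ d1)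
    (x22 : c2 ≠ d2) : PartPrecedes k n L c1 c2 d1 d2 ∨ PartPrecedes k n L d1 d2 c1 c2 := by
  have p0 : 0 < n := by omega
  have hC : ∀ u v u' v' : Fin (k * n), (u : ℕ) / n = c1 → (v : ℕ) / n = c2 → (u' : ℕ) / n = d1 →
      (v' : ℕ) / n = d2 → (L s(u, v) < L s(u', v') ↔
        L s(vtx k n c1 0 hc1 p0, vtx k n c2 0 hc2 p0) <
        L s(vtx k n d1 0 hd1 p0, vtx k n d2 0 hd2 p0)) := by
    intro u v u' v' hu hv hu' hv'
    apply hom_apply hL <;> (try simp only [vtx_div, vtx_mod]) <;> omega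
  by_cases h : L s(vtx k n c1 0 hc1 p0, vtx k n c2 0 hc2 p0) <
        L s(vtx k n d1 0 hd1 p0, vtx k n d2 0 hd2 p0)
  · left
    intro u v u' v' hu hv hu' hv'
    exact (hC u v u' v' hu hv hu' hv').mpr h
  · right
    intro u' v' u v hu' hv' hu hv1
    have h3 := mt (hC u v u' v' hu hv1 hu' hv').mp h
    have h4 : L s(u, v) ≠ L s(u', v') := by
      intro he
      rcases edge_ne hv _ _ _ _ (by omega) (by omega) he with ⟨x1, x2⟩ | ⟨x1, x2⟩
      · rw [x1] at hu; omega
      · rw [x1] at hu; omega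
    omega

theorem precedes_swap_left {k n : ℕ} {L : Sym2 (Fin (k * n)) → ℕ} {a b c d : ℕ}
    (h : PartPrecedes k n L a b c d) : PartPrecedes k n L b a c d := by
  intro u v u' v' hu hv hu' hv'
  rw [Sym2.eq_swap]
  exact h v u u' v' hv hu hu' hv'

theorem precedes_swap_right {k n : ℕ} {L : Sym2 (Fin (k * n)) → ℕ} {a b c d : ℕ}
    (h : PartPrecedes k n L a b c d) : PartPrecedes k n L a b d c := by
  intro u v u' v' hu hv hu' hv'
  rw [Sym2.eq_swap (a := u')]
  exact h u v v' u' hu hv hv' hu'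

theorem canonical_of_hom {k n : ℕ} (hn : 3 ≤ n) {L : Sym2 (Fin (k * n)) → ℕ}
    (hv : (EOGraph.mk (k * n) (multiK k n) L).Valid) (hL : HomLabel k n L) :
    CanonicalMulti k n L := by
  refine ⟨fun c1 c2 h12 h2 => part_canonical hn hv hL c1 c2 h12 h2, ?_⟩
  intro c1 c2 d1 d2 hc hc2 hd hd2 hne
  by_cases x11 : c1 = d1
  · subst x11
    have x22 : c2 ≠ d2 := by rintro rfl; exact hne rfl
    rcases shared_parts hn hv hL c1 c2 d2 (by omega) hc2 hd2 (by omega) (by omega) x22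
      with h | h | h
    · exact Or.inl h
    · exact Or.inr (Or.inl h)
    · exact Or.inr (Or.inr ⟨c1, c2, d2, rfl, rfl, h⟩)
  by_cases x12 : c1 = d2
  · subst x12
    rcases shared_parts hn hv hL c1 c2 d1 (by omega) hc2 (by omega) (by omega) (by omega)
      (by omega) with h | h | h
    · exact Or.inl (precedes_swap_right h)
    · exact Or.inr (Or.inl (precedes_swap_left h))
    · exact Or.inr (Or.inr ⟨c1, c2, d1, rfl, Set.pair_comm _ _, h⟩)
  by_cases x21 : c2 = d1
  · subst x21
    rcases shared_parts hn hv hL c2 c1 d2 (by omega) (by omega) (by omega) (by omega) (by omega)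
      (by omega) with h | h | h
    · exact Or.inl (precedes_swap_left h)
    · exact Or.inr (Or.inl (precedes_swap_right h))
    · exact Or.inr (Or.inr ⟨c2, c1, d2, Set.pair_comm _ _, rfl, h⟩)
  by_cases x22 : c2 = d2
  · subst x22
    rcases shared_parts hn hv hL c2 c1 d1 (by omega) (by omega) (by omega) (by omega) (by omega)
      (by omega) with h | h | h
    · exact Or.inl (precedes_swap_left (precedes_swap_right h))
    · exact Or.inr (Or.inl (precedes_swap_left (precedes_swap_right h)))
    · exact Or.inr (Or.inr ⟨c2, c1, d1, Set.pair_comm _ _, Set.pair_comm _ _, h⟩)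
  rcases disjoint_parts hn hv hL c1 c2 d1 d2 (by omega) hc2 (by omega) hd2 (by omega) (by omega)
    x11 x12 x21 x22 with h | h
  · exact Or.inl h
  · exact Or.inr (Or.inl h)

theorem multiK_colorable (k n : ℕ) : (multiK k n).Colorable k := by
  refine ⟨SimpleGraph.Coloring.mk (fun u => (⟨(u : ℕ) / n,
    Nat.div_lt_of_lt_mul (lt_of_lt_of_eq u.2 (mul_comm k n))⟩ : Fin k)) ?_⟩
  intro a b hab he
  exact (multiK_adj k n a b).mp hab (congrArg Fin.val he)

/-- For any `k ≥ 2` and any family `F` of edge-ordered graphs,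
`χ'_<(F) > k` if and only if for every `n ≥ 3` some canonical edge-order of `K_{k×n}`
avoids `F`. -/
theorem orderChrom_gt_iff_canonicalMulti (k : ℕ) (hk : 2 ≤ k) (F : Set EOGraph)
    (hval : ∀ H ∈ F, H.Valid) (hne : ∀ H ∈ F, H.graph.edgeSet.Nonempty) :
    (k : ℕ∞) < orderChrom F ↔
      ∀ n : ℕ, 3 ≤ n → ∃ L : Sym2 (Fin (k * n)) → ℕ,
        (EOGraph.mk (k * n) (multiK k n) L).Valid ∧ CanonicalMulti k n L ∧
        (EOGraph.mk (k * n) (multiK k n) L).AvoidsFam F := by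
  constructor
  · intro h n hn
    have hF : ∀ N, CanAvoid (multiK k N) F := by
      intro N
      by_contra hc
      have h1 : orderChrom F ≤ (multiK k N).chromaticNumber :=
        iInf_le_of_le (k * N) (iInf_le_of_le (multiK k N) (iInf_le_of_le hc le_rfl))
      exact absurd (h.trans_le (h1.trans (multiK_colorable k N).chromaticNumber_le))
        (lt_irrefl _)
    obtain ⟨L, hv, hh, ha⟩ := exists_hom k n F hF
    exact ⟨L, hv, canonical_of_hom hn hv hh, ha⟩
  · intro h
    have h1 : ((k : ℕ∞) + 1) ≤ orderChrom F := by
      refine le_iInf fun m => le_iInf fun G => le_iInf fun hc => ?_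
      apply Order.add_one_le_of_lt
      by_contra hle
      apply hc
      have hcol : G.Colorable k := SimpleGraph.chromaticNumber_le_iff_colorable.mp (not_lt.mp hle)
      obtain ⟨C⟩ := hcol
      obtain ⟨L, hv, _, ha⟩ := h (m + 3) (by omega)
      let e : Fin m ↪ Fin (k * (m + 3)) :=
        ⟨fun w => vtx k (m + 3) (C w) w (C w).2 (by omega), by
          intro a b hab
          have := congrArg (fun w : Fin (k * (m + 3)) => (w : ℕ) % (m + 3)) hab
          simp only [vtx_mod] at this
          exact Fin.ext this⟩
      have he : ∀ a b, G.Adj a b → (multiK k (m + 3)).Adj (e a) (e b) := by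
        intro a b hab
        rw [multiK_adj]
        have hev : ∀ w, ((e w : Fin (k * (m + 3))) : ℕ) / (m + 3) = (C w : ℕ) :=
          fun w => vtx_div k (m + 3) (C w) w (C w).2 (by omega)
        rw [hev, hev]
        intro hh
        exact C.valid hab (Fin.ext hh)
      exact ⟨L ∘ Sym2.map e, pullback_valid _ _ e he L hv, pullback_avoids _ _ e he L F ha⟩
    exact (ENat.add_one_le_iff (ENat.natCast_ne_top k)).mp h1
end
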